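/- arXiv:2010.15888 — 3 statements merged into one kernel-verified Lean document; each statement's English description precedes it below -/
import Mathlib

section
/- Let n ≥ 2 and let G be an almost controllable graph on Fin n having a pair of twins τ ≠ τ′, and suppose the (τ,n)-cofactor of W(G) equals ±2^{⌊n/2⌋−1}·b, where b is an odd, square-free, positive integer. Suppose that for every odd prime p dividing b there exists a vector x ∈ 𝔽_pⁿ with W(G)ᵀx = 0 and (A(G) − λ₁(G)·I)x ≠ 0 over 𝔽_p. Then G is DGS. In particular, if b = 1 then G is DGS. -/
/-!
Let `A` and `B` be the adjacency matrices of generalized cospectral graphs on `N = n + 2` vertices,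
`A` having twins `τ, τ'`, and write `α` for the vector with entries `∓1` at the twins. The idea is to
produce a rational orthogonal matrix `Q` with `A Q = Q B` that carries the walk vectors `B^k e` to
`A^k e`, and then to show that `Q` is integral. An integral orthogonal matrix with column sums `1` is a
permutation matrix, hence an isomorphism.

*Existence of `Q`.* Expanding `det (X - A + J)` along the rank-one perturbation `J` shows that the
generalized spectrum determines all walk numbers `eᵀ A^k e` (`mom_eq_of_genCospectral`). Since `α` is
orthogonal to all walk vectors and `det [e, Ae, …, A^{N-2}e, α] = -2 c ≠ 0`, where `c` is the given
cofactor, the Gram matrices of the walk vectors agree, there is a vector `β` for `B` playing the role of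
`α`, and `Q = [e, …, A^{N-2}e, α] [e, …, B^{N-2}e, β]⁻¹` is orthogonal. The difference
`A - Q B Qᵀ` is a multiple of `α αᵀ`, and it has trace zero, so it vanishes (`exists_orthogonal`).

*Integrality.* Let `ℓ` be the least positive integer with `P = ℓ Q` integral. It suffices that every
prime `p ∣ ℓ` divides all entries of `P`.

For `p` odd (`odd_prime_reduction`), `Pᵀ P = 0` and `Pᵀ A^k e = 0` modulo `p`. If `p ∤ b` the bordered
walk matrix is invertible modulo `p` and `P = 0` follows at once. If `p ∣ b`, its left kernel is a line
spanned by an eigenvector `x` of `A` whose eigenvalue `μ` differs from `λ₁`, by the hypothesis on `p`.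
If `P ≠ 0` modulo `p`, then `P = x yᵀ` with `xᵀ x = 0` and `B y = μ y`; isotropy forces
`x = g(A) e` for a polynomial `g` of degree `< N - 2`, and `g₀ = (X - μ) g` satisfies `g₀(A) e = 0`. As
`p²` does not divide the determinant, lifting `g₀(A) e = 0` to `ℤ` shows that `y` is a nonzero multiple of
`g₀(B) e`; but a nonzero `g₀(B) e` cannot be an eigenvector of `B` for `μ`, because `g(B) e` is
proportional to it (`no_nonzero_eigenvector`).

For `p = 2` (`two_reduction`), the walk vectors have the largest possible isotropic span modulo `2`, so
each column of `P` is modulo `2` a `0`-`1` combination of about `N / 2` consecutive walk vectors. The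
relations `Pᵀ A^k P = ℓ² B^k ≡ 0` modulo `4` turn into a linear system over `𝔽₂` for the coefficients
whose matrix is a halved Gram matrix; its determinant is `b²`, which is odd, so the coefficients vanish.
-/

open Matrix

namespace AlmostControllableGraphs

variable {n : ℕ}

/-- The all-ones vector. -/
def eVec (m : ℕ) : Fin m → ℤ := fun _ => 1

/-- The walk matrix `W(G) = [e, Ae, A²e, …, A^{n-1}e]` (columns indexed by `Fin (n+2)`). -/
def walkMatrix (A : Matrix (Fin (n + 2)) (Fin (n + 2)) ℤ) :
    Matrix (Fin (n + 2)) (Fin (n + 2)) ℤ :=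
  Matrix.of fun i j => ((A ^ (j : ℕ)) *ᵥ eVec (n + 2)) i

/-- `G` is almost controllable if its walk matrix has rank `n - 1` over `ℚ`. -/
def IsAlmostControllable (A : Matrix (Fin (n + 2)) (Fin (n + 2)) ℤ) : Prop :=
  ((walkMatrix A).map ((↑) : ℤ → ℚ)).rank = n + 1

/-- The matrix `V = [e, Ae, …, A^{n-2}e]`, the first `n - 1` columns of the walk matrix. -/
def Vmat (A : Matrix (Fin (n + 2)) (Fin (n + 2)) ℤ) :
    Matrix (Fin (n + 2)) (Fin (n + 1)) ℤ :=
  Matrix.of fun i j => walkMatrix A i j.castSucc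

/-- The matrix obtained from `V` by deleting row `i`. -/
def Xmat (A : Matrix (Fin (n + 2)) (Fin (n + 2)) ℤ) (i : Fin (n + 2)) :
    Matrix (Fin (n + 1)) (Fin (n + 1)) ℤ :=
  Matrix.of fun r c => Vmat A (i.succAbove r) c

/-- The `(i, n)`-cofactor of the walk matrix: `(−1)^{n+i}` times the determinant of the
matrix obtained by deleting row `i` and the last column from `W(G)`.
(In 0-based indexing the sign is `(−1)^{i + (n-1)}`.) -/
def cofactorLast (A : Matrix (Fin (n + 2)) (Fin (n + 2)) ℤ) (i : Fin (n + 2)) : ℤ :=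
  (-1 : ℤ) ^ ((i : ℕ) + (n + 1)) * (Xmat A i).det

/-- The vector `ξ(G)` of last-column cofactors of the walk matrix. -/
def xiVec (A : Matrix (Fin (n + 2)) (Fin (n + 2)) ℤ) : Fin (n + 2) → ℤ :=
  fun i => cofactorLast A i

/-- The rational scalar `2^{1 - ⌊n/2⌋}`. -/
def twoPow (n : ℕ) : ℚ := (2 : ℚ) ^ ((1 : ℤ) - (((n + 2) / 2 : ℕ) : ℤ))

/-- The matrix `W_δ(G) = [e, Ae, …, A^{n-2}e, (−1)^δ·2^{1-⌊n/2⌋}·ξ(G)]`. -/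
def Wdelta (A : Matrix (Fin (n + 2)) (Fin (n + 2)) ℤ) (δ : ℕ) :
    Matrix (Fin (n + 2)) (Fin (n + 2)) ℚ :=
  Matrix.of fun i j =>
    if (j : ℕ) = n + 1 then (-1 : ℚ) ^ δ * twoPow n * (xiVec A i : ℚ)
    else ((walkMatrix A i j : ℤ) : ℚ)

/-- A matrix is regular orthogonal if it is orthogonal and has all row sums equal to 1. -/
def IsRegularOrthogonal {K : Type*} [Field K] {m : ℕ} (Q : Matrix (Fin m) (Fin m) K) : Prop :=
  Qᵀ * Q = 1 ∧ Q *ᵥ (fun _ => (1 : K)) = fun _ => 1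

/-- Adjacency matrix of the complement graph. -/
def complMat (A : Matrix (Fin (n + 2)) (Fin (n + 2)) ℤ) :
    Matrix (Fin (n + 2)) (Fin (n + 2)) ℤ :=
  Matrix.of fun i j => if i = j then 0 else 1 - A i j

/-- Two graphs are generalized cospectral if they are cospectral and so are their complements. -/
def GenCospectral (A B : Matrix (Fin (n + 2)) (Fin (n + 2)) ℤ) : Prop :=
  A.charpoly = B.charpoly ∧ (complMat A).charpoly = (complMat B).charpoly

/-- `τ` and `τ'` are twins: the transposition swapping them is an automorphism. -/
def IsTwinPair (A : Matrix (Fin (n + 2)) (Fin (n + 2)) ℤ) (τ τ' : Fin (n + 2)) : Prop :=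
  ∀ i j, A (Equiv.swap τ τ' i) (Equiv.swap τ τ' j) = A i j

/-- `λ₁(G) = −1` if the twins are adjacent and `0` otherwise; for a 0-1 matrix this
is `−A τ τ'`. -/
def lam1 (A : Matrix (Fin (n + 2)) (Fin (n + 2)) ℤ) (τ τ' : Fin (n + 2)) : ℤ :=
  -(A τ τ')

/-- The vector `α(G)` with entry `−1` at `τ`, `1` at `τ'`, and `0` elsewhere. -/
def alphaVec (τ τ' : Fin (n + 2)) : Fin (n + 2) → ℤ :=
  fun i => if i = τ then -1 else if i = τ' then 1 else 0

/-- The reduction of `α(G)` modulo `p`. -/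
def alphaVecMod (p : ℕ) (τ τ' : Fin (n + 2)) : Fin (n + 2) → ZMod p :=
  fun i => ((alphaVec τ τ' i : ℤ) : ZMod p)

/-- The matrix `Ŵ(G) = [e, Ae, …, A^{n-2}e, α(G)]`. -/
def hatW (A : Matrix (Fin (n + 2)) (Fin (n + 2)) ℤ) (τ τ' : Fin (n + 2)) :
    Matrix (Fin (n + 2)) (Fin (n + 2)) ℤ :=
  Matrix.of fun i j => if (j : ℕ) = n + 1 then alphaVec τ τ' i else walkMatrix A i j

/-- The level of a rational matrix: the smallest positive integer `ℓ` such that `ℓQ` is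
an integer matrix. -/
noncomputable def level {m : ℕ} (Q : Matrix (Fin m) (Fin m) ℚ) : ℕ :=
  sInf {k : ℕ | 0 < k ∧ ∀ i j, ((k : ℚ) * Q i j).den = 1}

/-- A permutation matrix. -/
def IsPermMatrix {m : ℕ} (Q : Matrix (Fin m) (Fin m) ℚ) : Prop :=
  ∃ σ : Equiv.Perm (Fin m), ∀ i j, Q i j = if σ i = j then 1 else 0

/-- `G` is determined by its generalized spectrum: every graph generalized cospectral with
`G` is isomorphic to `G`. -/
def IsDGS (A : Matrix (Fin (n + 2)) (Fin (n + 2)) ℤ) : Prop :=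
  ∀ B : Matrix (Fin (n + 2)) (Fin (n + 2)) ℤ, B.IsAdjMatrix → GenCospectral A B →
    ∃ σ : Equiv.Perm (Fin (n + 2)), ∀ i j, B i j = A (σ i) (σ j)

/-! ### Walk vectors and walk numbers -/

/-- The walk vector `A^k e` over an arbitrary commutative ring. -/
def kry {ι R : Type*} [Fintype ι] [DecidableEq ι] [CommRing R] (A : Matrix ι ι R) (k : ℕ) : ι → R :=
  A ^ k *ᵥ 1

theorem mulVec_dotProduct_symm {ι R : Type*} [Fintype ι] [CommRing R] {A : Matrix ι ι R} (hA : A.IsSymm)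
    (u v : ι → R) :
    (A *ᵥ u) ⬝ᵥ v = u ⬝ᵥ (A *ᵥ v) := by
  rw [dotProduct_mulVec, ← mulVec_transpose, hA.eq]

section kry
variable {ι R S : Type*} [Fintype ι] [DecidableEq ι] [CommRing R] [CommRing S]

theorem kry_zero (A : Matrix ι ι R) : kry A 0 = 1 := by simp [kry]

theorem kry_succ (A : Matrix ι ι R) (k : ℕ) : kry A (k + 1) = A *ᵥ kry A k := by
  simp [kry, pow_succ', mulVec_mulVec]

theorem kry_map (f : R →+* S) (A : Matrix ι ι R) (k : ℕ) (i : ι) :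
    kry (A.map f) k i = f (kry A k i) := by
  have h : (A.map f) ^ k = (A ^ k).map f := by
    have := map_pow f.mapMatrix A k
    simpa using this.symm
  simp [kry, h, mulVec, dotProduct]

theorem pow_mulVec_kry (A : Matrix ι ι R) (j k : ℕ) : A ^ j *ᵥ kry A k = kry A (j + k) := by
  simp [kry, pow_add, mulVec_mulVec]

theorem isSymm_pow {A : Matrix ι ι R} (hA : A.IsSymm) (k : ℕ) : (A ^ k).IsSymm := by
  rw [IsSymm, transpose_pow, hA.eq]

theorem kry_dotProduct_symm {A : Matrix ι ι R} (hA : A.IsSymm) (k : ℕ) (v : ι → R) :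
    kry A k ⬝ᵥ v = 1 ⬝ᵥ (A ^ k *ᵥ v) :=
  mulVec_dotProduct_symm (isSymm_pow hA k) _ _

/-- The number `eᵀ A^k e` of walks of length `k`. -/
def mom (A : Matrix ι ι R) (k : ℕ) : R := 1 ⬝ᵥ kry A k

theorem mom_map (f : R →+* S) (A : Matrix ι ι R) (k : ℕ) : mom (A.map f) k = f (mom A k) := by
  simp [mom, dotProduct, kry_map]

theorem kry_dotProduct_kry {A : Matrix ι ι R} (hA : A.IsSymm) (j k : ℕ) :
    kry A j ⬝ᵥ kry A k = mom A (j + k) := by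
  rw [kry_dotProduct_symm hA, pow_mulVec_kry, mom]

end kry

/-! ### Generalized cospectral graphs have the same walk numbers -/

section moments
open Polynomial
variable {ι : Type*} [Fintype ι] [DecidableEq ι]

/-- The matrix determinant lemma, with the adjugate in place of the inverse. -/
theorem det_add_all_ones {R : Type*} [CommRing R] [IsDomain R] (M : Matrix ι ι R)
    (hM : M.det ≠ 0) :
    (M + Matrix.of fun _ _ => 1).det = M.det + 1 ⬝ᵥ (M.adjugate *ᵥ 1) := by
  let K := FractionRing R
  have hinj : Function.Injective (algebraMap R K) := IsFractionRing.injective R K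
  apply hinj
  let f := algebraMap R K
  let M' : Matrix ι ι K := f.mapMatrix M
  have hdet : M'.det = f M.det := (RingHom.map_det f M).symm
  have hu : IsUnit M'.det := by
    rw [hdet, isUnit_iff_ne_zero]
    exact fun h => hM (hinj (by rw [map_zero]; exact h))
  let U : Matrix ι Unit K := replicateCol Unit 1
  let V : Matrix Unit ι K := replicateRow Unit 1
  have h : (M' + U * V).det = M'.det * (1 + V * M'⁻¹ * U).det :=
    det_add_replicateCol_mul_replicateRow (ι := Unit) hu 1 1
  have h1 : f.mapMatrix (M + Matrix.of fun _ _ => 1) =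
      M' + U * V := by
    ext i j
    simp [M', U, V, Matrix.mul_apply]
  have hne : M'.det ≠ 0 := hu.ne_zero
  have h2 : (1 + V * M'⁻¹ * U).det =
      1 + M'.det⁻¹ * (1 ⬝ᵥ (M'.adjugate *ᵥ 1)) := by
    rw [det_unique]
    simp only [Matrix.add_apply, Matrix.one_apply_eq, Matrix.mul_assoc]
    rw [Matrix.inv_def, Ring.inverse_eq_inv']
    simp [U, V, Matrix.mul_apply, dotProduct, mulVec, ← Finset.mul_sum]
  change f _ = f _
  rw [RingHom.map_det, h1, h, h2, mul_add, mul_inv_cancel_left₀ hne, mul_one, hdet, map_add]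
  congr 1
  have h3 : M'.adjugate = f.mapMatrix M.adjugate := (RingHom.map_adjugate f M).symm
  simp [h3, dotProduct, mulVec]

/-- The coefficient recursion of `adj (X - A)` pins down all walk numbers. -/
theorem mom_eq_of_adjugate (A B : Matrix ι ι ℤ) (hc : A.charpoly = B.charpoly)
    (hadj : (1 : ι → ℤ[X]) ⬝ᵥ (A.charmatrix.adjugate *ᵥ 1) =
      1 ⬝ᵥ (B.charmatrix.adjugate *ᵥ 1)) (k : ℕ) : mom A k = mom B k := by
  -- `P A i` is the `i`-th matrix coefficient of `adj (X - A)`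
  let P : Matrix ι ι ℤ → ℕ → Matrix ι ι ℤ := fun A i => (matPolyEquiv A.charmatrix.adjugate).coeff i
  have hmul : ∀ A : Matrix ι ι ℤ, (X - C A) * matPolyEquiv A.charmatrix.adjugate =
      A.charpoly.map (algebraMap ℤ (Matrix ι ι ℤ)) := by
    intro A
    have h : A.charpoly • (1 : Matrix ι ι ℤ[X]) = charmatrix A * adjugate (charmatrix A) :=
      (mul_adjugate _).symm
    apply_fun matPolyEquiv at h
    rw [map_mul, matPolyEquiv_charmatrix, matPolyEquiv_smul_one] at h
    exact h.symm
  have hsucc : ∀ (A : Matrix ι ι ℤ) (i : ℕ), P A i =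
      A.charpoly.coeff (i + 1) • (1 : Matrix ι ι ℤ) + A * P A (i + 1) := by
    intro A i
    have := congrArg (fun p => coeff p (i + 1)) (hmul A)
    simp only [sub_mul, coeff_sub, coeff_X_mul, coeff_C_mul, coeff_map] at this
    rw [sub_eq_iff_eq_add] at this
    rw [Algebra.algebraMap_eq_smul_one] at this
    exact this
  have hzero : ∀ (A : Matrix ι ι ℤ), A * P A 0 = -(A.charpoly.coeff 0 • (1 : Matrix ι ι ℤ)) := by
    intro A
    have := congrArg (fun p => coeff p 0) (hmul A)
    simp only [sub_mul, coeff_sub, coeff_map, mul_coeff_zero, coeff_X_zero, coeff_C_zero, zero_mul,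
      zero_sub, Algebra.algebraMap_eq_smul_one] at this
    rw [← this, neg_neg]
  have htop : ∀ (A : Matrix ι ι ℤ), P A (Fintype.card ι) = 0 := by
    intro A
    have h1 : ∀ j, P A (Fintype.card ι) = A ^ j * P A (Fintype.card ι + j) := by
      intro j
      induction j with
      | zero => simp
      | succ j ih =>
        rw [ih, hsucc A (Fintype.card ι + j), coeff_eq_zero_of_natDegree_lt]
        · simp [pow_succ, Matrix.mul_assoc, add_assoc]
        · rw [charpoly_natDegree_eq_dim]; lia
    rw [h1 ((matPolyEquiv A.charmatrix.adjugate).natDegree + 1)]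
    have : P A (Fintype.card ι + ((matPolyEquiv A.charmatrix.adjugate).natDegree + 1)) = 0 :=
      coeff_eq_zero_of_natDegree_lt (by lia)
    rw [this, mul_zero]
  let b : Matrix ι ι ℤ → ℕ → ℕ → ℤ := fun A k i => 1 ⬝ᵥ ((A ^ k * P A i) *ᵥ 1)
  have hb : ∀ A k i, b A k i = A.charpoly.coeff (i + 1) * mom A k + b A (k + 1) (i + 1) := by
    intro A k i
    simp only [b]
    rw [hsucc A i, mul_add, add_mulVec, dotProduct_add, ← Matrix.mul_assoc, ← pow_succ]
    congr 1
    rw [Matrix.mul_smul, smul_mulVec, dotProduct_smul, Matrix.mul_one, smul_eq_mul, mom, kry]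
  have hb0 : ∀ A k, b A (k + 1) 0 = -(A.charpoly.coeff 0 * mom A k) := by
    intro A k
    simp only [b]
    rw [pow_succ, Matrix.mul_assoc, hzero]
    rw [Matrix.mul_neg, neg_mulVec, dotProduct_neg, Matrix.mul_smul, smul_mulVec, dotProduct_smul,
      Matrix.mul_one, smul_eq_mul, mom, kry]
  have hstep : ∀ k, (∀ i, b A k i = b B k i) → mom A k = mom B k := by
    intro k ih
    rcases isEmpty_or_nonempty ι with he | he
    · simp [mom, dotProduct]
    · obtain ⟨m, hm⟩ : ∃ m, Fintype.card ι = m + 1 :=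
        Nat.exists_eq_succ_of_ne_zero Fintype.card_ne_zero
      have h1 : ∀ A : Matrix ι ι ℤ, A.charpoly.coeff (m + 1) = 1 := by
        intro A
        rw [← hm, ← charpoly_natDegree_eq_dim A]
        exact charpoly_monic A
      have h2 : ∀ A : Matrix ι ι ℤ, b A (k + 1) (m + 1) = 0 := by
        intro A
        simp only [b]
        rw [← hm, htop]
        simp
      have h := ih m
      rw [hb A, hb B, h1, h1, h2, h2] at h
      simpa using h
  have key : ∀ k, ∀ i, b A k i = b B k i := by
    intro k
    induction k with
    | zero =>
      intro i
      have := congrArg (fun p => coeff p i) hadj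
      simp only [dotProduct, mulVec, Pi.one_apply, one_mul, mul_one, finsetSum_coeff] at this
      simp only [b, P, pow_zero, one_mul, dotProduct, mulVec, Pi.one_apply, mul_one,
        matPolyEquiv_coeff_apply]
      exact this
    | succ k ih =>
      have hm := hstep k ih
      intro i
      cases i with
      | zero => rw [hb0, hb0, hc, hm]
      | succ i =>
        have h := ih i
        rw [hb A, hb B, hc, hm] at h
        exact add_left_cancel h
  exact hstep k (key k)

/-- Substituting `-X - 1` in the characteristic polynomial of the complement gives, up to sign,
`det (X - A + J)`, with `J` the all-ones matrix. -/
theorem complMat_charpoly_comp {n : ℕ} (A : Matrix (Fin (n + 2)) (Fin (n + 2)) ℤ)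
    (hA : ∀ i, A i i = 0) :
    (complMat A).charpoly.comp (-X - 1) =
      (-1) ^ (n + 2) * (A.charpoly + 1 ⬝ᵥ (A.charmatrix.adjugate *ᵥ 1)) := by
  have h1 : A.charpoly + 1 ⬝ᵥ (A.charmatrix.adjugate *ᵥ 1) =
      (A.charmatrix + Matrix.of fun _ _ => 1).det :=
    (det_add_all_ones _ (charpoly_monic A).ne_zero).symm
  have h2 : (complMat A).charpoly.comp (-X - 1) =
      (compRingHom (-X - 1)) (complMat A).charmatrix.det := rfl
  rw [h1, h2, RingHom.map_det]
  have h3 : ((compRingHom (-X - 1 : ℤ[X])).mapMatrix (complMat A).charmatrix) =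
      (-1 : ℤ[X]) • (A.charmatrix + Matrix.of fun _ _ => 1) := by
    ext1 i j
    rcases eq_or_ne i j with rfl | hij
    · simp [charmatrix_apply_eq, complMat, hA]
      ring
    · simp [complMat, hij]
      ring
  rw [h3, det_smul]
  simp

theorem mom_eq_of_genCospectral {n : ℕ} {A B : Matrix (Fin (n + 2)) (Fin (n + 2)) ℤ}
    (hA : A.IsAdjMatrix) (hB : B.IsAdjMatrix) (h : GenCospectral A B) (k : ℕ) :
    mom A k = mom B k := by
  refine mom_eq_of_adjugate A B h.1 ?_ k
  have h1 := complMat_charpoly_comp A hA.apply_diag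
  rw [h.2, complMat_charpoly_comp B hB.apply_diag, h.1] at h1
  have h2 : ((-1 : ℤ[X]) ^ (n + 2)) ≠ 0 := pow_ne_zero _ (by simp)
  exact (add_left_cancel (mul_left_cancel₀ h2 h1)).symm

end moments

/-! ### Twins and the bordered walk matrix -/

section hat
variable {n : ℕ} {R S : Type*} [CommRing R] [CommRing S]

/-- The bordered walk matrix `[e, Ae, …, A^{N-2}e, v]` over an arbitrary commutative ring. -/
def hat (A : Matrix (Fin (n + 2)) (Fin (n + 2)) R) (v : Fin (n + 2) → R) :
    Matrix (Fin (n + 2)) (Fin (n + 2)) R :=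
  Matrix.of fun i j => if (j : ℕ) = n + 1 then v i else kry A j i

@[simp] theorem hat_last (A : Matrix (Fin (n + 2)) (Fin (n + 2)) R) (v : Fin (n + 2) → R)
    (i : Fin (n + 2)) : hat A v i (Fin.last (n + 1)) = v i := by
  simp [hat]

@[simp] theorem hat_castSucc (A : Matrix (Fin (n + 2)) (Fin (n + 2)) R) (v : Fin (n + 2) → R)
    (i : Fin (n + 2)) (j : Fin (n + 1)) : hat A v i j.castSucc = kry A j i := by
  simp [hat, j.2.ne]

theorem hat_map (f : R →+* S) (A : Matrix (Fin (n + 2)) (Fin (n + 2)) R) (v : Fin (n + 2) → R) :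
    (hat A v).map f = hat (A.map f) (fun i => f (v i)) := by
  ext i j
  refine Fin.lastCases ?_ (fun j => ?_) j
  · simp
  · simp [kry_map]

theorem hat_mulVec (A : Matrix (Fin (n + 2)) (Fin (n + 2)) R) (v f : Fin (n + 2) → R) :
    hat A v *ᵥ f = (∑ j : Fin (n + 1), f j.castSucc • kry A j) + f (Fin.last _) • v := by
  ext i
  simp [mulVec, dotProduct, Fin.sum_univ_castSucc, Finset.sum_apply, mul_comm]

theorem hat_transpose_mulVec_castSucc (A : Matrix (Fin (n + 2)) (Fin (n + 2)) R)
    (v x : Fin (n + 2) → R) (j : Fin (n + 1)) :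
    ((hat A v)ᵀ *ᵥ x) j.castSucc = kry A j ⬝ᵥ x := by
  simp [mulVec, dotProduct]

theorem hat_transpose_mulVec_last (A : Matrix (Fin (n + 2)) (Fin (n + 2)) R)
    (v x : Fin (n + 2) → R) :
    ((hat A v)ᵀ *ᵥ x) (Fin.last _) = v ⬝ᵥ x := by
  simp [mulVec, dotProduct]

theorem hat_transpose_mulVec_eq_zero {A : Matrix (Fin (n + 2)) (Fin (n + 2)) R}
    {v x : Fin (n + 2) → R} (h : ∀ k, k < n + 1 → kry A k ⬝ᵥ x = 0) (hv : v ⬝ᵥ x = 0) :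
    (hat A v)ᵀ *ᵥ x = 0 := by
  ext j
  refine Fin.lastCases ?_ (fun j => ?_) j
  · rw [hat_transpose_mulVec_last, hv, Pi.zero_apply]
  · rw [hat_transpose_mulVec_castSucc, h _ j.2, Pi.zero_apply]

/-- The Gram matrix `(eᵀ A^{i+j} e)` of the first `N - 1` walk vectors. -/
def gram (A : Matrix (Fin (n + 2)) (Fin (n + 2)) R) : Matrix (Fin (n + 1)) (Fin (n + 1)) R :=
  Matrix.of fun i j => mom A (i + j)

/-- If `v` is orthogonal to the walk vectors, the Gram matrix of the columns of `hat A v` is block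
diagonal, with blocks `gram A` and `v ⬝ᵥ v`. -/
theorem hat_gram_apply {A : Matrix (Fin (n + 2)) (Fin (n + 2)) R} (hA : A.IsSymm)
    {v : Fin (n + 2) → R} (hv : ∀ k, k < n + 1 → kry A k ⬝ᵥ v = 0) (i j : Fin (n + 2)) :
    ((hat A v)ᵀ * hat A v) i j =
      Fin.lastCases (motive := fun _ => R)
        (Fin.lastCases (motive := fun _ => R) (v ⬝ᵥ v) (fun _ => 0) j)
        (fun i => Fin.lastCases (motive := fun _ => R) 0 (fun j => gram A i j) j) i := by
  have h : ((hat A v)ᵀ * hat A v) i j = ((hat A v)ᵀ *ᵥ (fun k => hat A v k j)) i := by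
    simp [Matrix.mul_apply, mulVec, dotProduct]
  rw [h]
  refine Fin.lastCases ?_ (fun i => ?_) i <;> refine Fin.lastCases ?_ (fun j => ?_) j
  · rw [hat_transpose_mulVec_last]; simp
  · rw [hat_transpose_mulVec_last]; simp only [hat_castSucc, Fin.lastCases_last,
      Fin.lastCases_castSucc]
    rw [dotProduct_comm]
    exact hv _ j.2
  · rw [hat_transpose_mulVec_castSucc]; simp only [hat_last, Fin.lastCases_last,
      Fin.lastCases_castSucc]
    exact hv _ i.2
  · rw [hat_transpose_mulVec_castSucc]; simp only [hat_castSucc, Fin.lastCases_castSucc]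
    exact kry_dotProduct_kry hA _ _

theorem det_hat_sq {A : Matrix (Fin (n + 2)) (Fin (n + 2)) R} (hA : A.IsSymm)
    {v : Fin (n + 2) → R} (hv : ∀ k, k < n + 1 → kry A k ⬝ᵥ v = 0) :
    (hat A v).det ^ 2 = (gram A).det * (v ⬝ᵥ v) := by
  have h : ((hat A v)ᵀ * hat A v).det = (hat A v).det ^ 2 := by
    rw [det_mul, det_transpose, sq]
  rw [← h, det_succ_row _ (Fin.last (n + 1)), Fin.sum_univ_castSucc]
  have h1 : ((hat A v)ᵀ * hat A v).submatrix (Fin.last (n + 1)).succAbove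
      (Fin.last (n + 1)).succAbove = gram A := by
    ext i j
    rw [submatrix_apply, hat_gram_apply hA hv]
    simp
  rw [h1]
  simp only [hat_gram_apply hA hv]
  simp [← two_mul, mul_comm]

end hat

section twins
variable {n : ℕ}

/-- Laplace expansion of the bordered walk determinant along its last column. -/
theorem det_hat (A : Matrix (Fin (n + 2)) (Fin (n + 2)) ℤ) (v : Fin (n + 2) → ℤ) :
    (hat A v).det = ∑ i, v i * cofactorLast A i := by
  rw [det_succ_column _ (Fin.last (n + 1))]
  refine Finset.sum_congr rfl fun i _ => ?_
  have : (hat A v).submatrix i.succAbove (Fin.last (n + 1)).succAbove = Xmat A i := by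
    ext r c
    simp [Xmat, Vmat, walkMatrix, kry]
    rfl
  rw [this, hat_last, cofactorLast, Fin.val_last]
  ring

variable {A : Matrix (Fin (n + 2)) (Fin (n + 2)) ℤ} {τ τ' : Fin (n + 2)}

theorem alphaVec_dot {R : Type*} [CommRing R] (hne : τ ≠ τ') (x : Fin (n + 2) → R) :
    (fun i => ((alphaVec τ τ' i : ℤ) : R)) ⬝ᵥ x = x τ' - x τ := by
  have h : ∀ i, ((alphaVec τ τ' i : ℤ) : R) * x i =
      (if i = τ' then x i else 0) - (if i = τ then x i else 0) := by
    intro i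
    by_cases h1 : i = τ
    · subst h1; simp [alphaVec, hne]
    · by_cases h2 : i = τ' <;> simp [alphaVec, h1, h2, hne.symm]
  simp [dotProduct, h]

theorem mulVec_alphaVec (hA : A.IsAdjMatrix) (hne : τ ≠ τ') (htw : IsTwinPair A τ τ') :
    A *ᵥ alphaVec τ τ' = lam1 A τ τ' • alphaVec τ τ' := by
  ext i
  have h := alphaVec_dot (R := ℤ) hne (A i)
  simp only [Int.cast_id] at h
  have h' : (A *ᵥ alphaVec τ τ') i = A i τ' - A i τ := by
    rw [mulVec, dotProduct_comm]; exact h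
  rw [h', Pi.smul_apply, smul_eq_mul]
  by_cases h1 : i = τ
  · subst h1; simp [alphaVec, lam1, hA.apply_diag]
  · by_cases h2 : i = τ'
    · subst h2
      simp [alphaVec, lam1, hA.apply_diag, hne.symm, hA.symm.apply i τ]
    · have h3 := htw i τ
      rw [Equiv.swap_apply_of_ne_of_ne h1 h2, Equiv.swap_apply_left] at h3
      simp [alphaVec, h1, h2, h3]

theorem kry_swap (htw : IsTwinPair A τ τ') (k : ℕ) (i : Fin (n + 2)) :
    kry A k (Equiv.swap τ τ' i) = kry A k i := by
  induction k generalizing i with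
  | zero => simp [kry_zero]
  | succ k ih =>
    simp only [kry_succ, mulVec, dotProduct]
    rw [← Equiv.sum_comp (Equiv.swap τ τ')]
    simp [htw _ _, ih]

theorem kry_dot_alphaVec (hne : τ ≠ τ') (htw : IsTwinPair A τ τ') (k : ℕ) :
    kry A k ⬝ᵥ alphaVec τ τ' = 0 := by
  have h := alphaVec_dot (R := ℤ) hne (kry A k)
  simp only [Int.cast_id] at h
  rw [dotProduct_comm]
  have h2 := kry_swap htw k τ
  rw [Equiv.swap_apply_left] at h2
  exact h.trans (by rw [h2, sub_self])

theorem alphaVec_self (hne : τ ≠ τ') : alphaVec τ τ' ⬝ᵥ alphaVec τ τ' = 2 := by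
  have h := alphaVec_dot (R := ℤ) hne (alphaVec τ τ')
  simp only [Int.cast_id] at h
  exact h.trans (by simp [alphaVec, hne.symm])

theorem cofactorLast_twin (hne : τ ≠ τ') (htw : IsTwinPair A τ τ') :
    cofactorLast A τ' = -cofactorLast A τ := by
  have h1 : ∀ t, (hat A (Pi.single t 1)).det = cofactorLast A t := by
    intro t
    rw [det_hat]
    simp [Pi.single_apply]
  rw [← h1, ← h1]
  have h2 : hat A (Pi.single τ' 1) = (hat A (Pi.single τ 1)).submatrix (Equiv.swap τ τ') id := by
    ext i j
    rw [submatrix_apply]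
    refine Fin.lastCases ?_ (fun j => ?_) j
    · simp only [id, hat_last, Pi.single_apply]
      have : Equiv.swap τ τ' i = τ ↔ i = τ' := by
        rw [Equiv.swap_apply_eq_iff, Equiv.swap_apply_left]
      simp [this]
    · simp only [id, hat_castSucc, kry_swap htw]
  rw [h2, det_permute, Equiv.Perm.sign_swap hne]
  simp

theorem det_hat_alphaVec (hne : τ ≠ τ') (htw : IsTwinPair A τ τ') :
    (hat A (alphaVec τ τ')).det = -2 * cofactorLast A τ := by
  rw [det_hat]
  have h := alphaVec_dot (R := ℤ) hne (cofactorLast A)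
  simp only [Int.cast_id] at h
  refine h.trans ?_
  rw [cofactorLast_twin hne htw]
  ring

end twins

/-! ### Determinants modulo primes -/

section general

theorem pow_card_dvd_det {ι : Type*} [Fintype ι] [DecidableEq ι] (M : Matrix ι ι ℤ) (p : ℤ)
    (s : Finset ι) (h : ∀ j ∈ s, ∀ i, p ∣ M i j) : p ^ s.card ∣ M.det := by
  classical
  have h' : ∀ i j, ∃ y, M i j = y * (if j ∈ s then p else 1) := by
    intro i j
    by_cases hj : j ∈ s
    · obtain ⟨y, hy⟩ := h j hj i
      exact ⟨y, by rw [if_pos hj, hy, mul_comm]⟩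
    · exact ⟨M i j, by simp [hj]⟩
  choose Y hY using h'
  have hM : M = (Matrix.of Y : Matrix ι ι ℤ) *
      (Matrix.diagonal fun j => if j ∈ s then p else 1 : Matrix ι ι ℤ) := by
    ext i j
    rw [Matrix.mul_diagonal, hY]
    rfl
  rw [hM, det_mul, det_diagonal]
  refine Dvd.dvd.mul_left ?_ _
  rw [Finset.prod_ite_mem]
  simp

/-- The nullity of `X` modulo a prime `p` is at most the exponent of `p` in `det X`: multiplying by a
lift of a basis adapted to the kernel makes nullity-many columns divisible by `p`. -/
theorem finrank_ker_le {ι : Type*} [Fintype ι] [DecidableEq ι] (X : Matrix ι ι ℤ) (p : ℕ)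
    [Fact p.Prime] (r : ℕ) (h : ¬ (p : ℤ) ^ (r + 1) ∣ X.det) :
    Module.finrank (ZMod p) (LinearMap.ker (X.map (Int.castRingHom (ZMod p))).mulVecLin) ≤ r := by
  classical
  by_contra hr
  rw [not_le] at hr
  apply h
  set f := (X.map (Int.castRingHom (ZMod p))).mulVecLin with hf
  set K := LinearMap.ker f with hK
  obtain ⟨C, hC⟩ := Submodule.exists_isCompl K
  let bK := Module.finBasis (ZMod p) K
  let bC := Module.finBasis (ZMod p) C
  let b0 := (bK.prod bC).map (Submodule.prodEquivOfIsCompl K C hC)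
  have hcard : Fintype.card (Fin (Module.finrank (ZMod p) K) ⊕ Fin (Module.finrank (ZMod p) C)) =
      Fintype.card ι := by
    rw [← Module.finrank_eq_card_basis b0, Module.finrank_fintype_fun_eq_card]
  let e := Fintype.equivOfCardEq hcard
  let b := b0.reindex e
  let P : Matrix ι ι ℤ := Matrix.of fun i j => ((b j i).val : ℤ)
  have hP : P.map (Int.castRingHom (ZMod p)) = (Pi.basisFun (ZMod p) ι).toMatrix b := by
    ext i j
    simp [P, Module.Basis.toMatrix_apply]
  have hdet : ¬ (p : ℤ) ∣ P.det := by
    intro hd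
    rw [← ZMod.intCast_zmod_eq_zero_iff_dvd] at hd
    have h2 : (P.map (Int.castRingHom (ZMod p))).det = 0 := by
      rw [← RingHom.mapMatrix_apply, ← RingHom.map_det]; exact hd
    rw [hP] at h2
    have h3 := Module.Basis.isUnit_det (Pi.basisFun (ZMod p) ι) b
    rw [Module.Basis.det_apply, h2] at h3
    exact not_isUnit_zero h3
  let s : Finset ι := Finset.univ.map ⟨fun i : Fin (Module.finrank (ZMod p) K) => e (Sum.inl i),
    fun i j hij => by simpa using hij⟩
  have hs : s.card = Module.finrank (ZMod p) K := by simp [s]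
  have h4 : ((p : ℤ)) ^ s.card ∣ (X * P).det := by
    apply pow_card_dvd_det
    intro j hj i
    simp only [s, Finset.mem_map, Finset.mem_univ, true_and] at hj
    obtain ⟨k, rfl⟩ := hj
    rw [← ZMod.intCast_zmod_eq_zero_iff_dvd]
    have hb : b (e (Sum.inl k)) = (bK k : ι → ZMod p) := by
      simp [b, b0, Module.Basis.prod_apply]
    have hk : f (bK k) = 0 := (bK k).2
    have hki : ∑ l, (X i l : ZMod p) * (bK k : ι → ZMod p) l = 0 := congrFun hk i
    have hsum : (((X * P) i (e (Sum.inl k)) : ℤ) : ZMod p) =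
        ∑ l, (X i l : ZMod p) * (bK k : ι → ZMod p) l := by
      simp [Matrix.mul_apply, P, hb]
    exact hsum.trans hki
  rw [det_mul, hs] at h4
  have h5 : IsCoprime ((p : ℤ) ^ (r + 1)) P.det := by
    apply IsCoprime.pow_left
    exact ((Nat.prime_iff_prime_int.mp (Fact.out : p.Prime)).coprime_iff_not_dvd).mpr hdet
  exact h5.dvd_of_dvd_mul_right ((pow_dvd_pow _ hr).trans h4)

theorem det_eq_zero_mod {ι : Type*} [Fintype ι] [DecidableEq ι] (X : Matrix ι ι ℤ) (p : ℕ) :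
    (X.map (Int.castRingHom (ZMod p))).det = 0 ↔ (p : ℤ) ∣ X.det := by
  rw [← ZMod.intCast_zmod_eq_zero_iff_dvd, ← RingHom.mapMatrix_apply, ← RingHom.map_det]; rfl

/-- A relation `X f = p v` with `f` nonzero modulo `p`, together with a left null vector of `X`
modulo `p` that also annihilates `v`, makes `det X` divisible by `p ^ 2`. -/
theorem sq_dvd_det {ι : Type*} [Fintype ι] [DecidableEq ι] (X : Matrix ι ι ℤ) (p : ℕ)
    [Fact p.Prime] (f v : ι → ℤ) (x : ι → ZMod p) (hx : x ≠ 0)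
    (hxX : (X.map (Int.castRingHom (ZMod p)))ᵀ *ᵥ x = 0) (hf : X *ᵥ f = (p : ℤ) • v)
    (hxv : (fun i => (v i : ZMod p)) ⬝ᵥ x = 0) (j : ι) (hj : (f j : ZMod p) ≠ 0) :
    (p : ℤ) ^ 2 ∣ X.det := by
  have hp : (p : ℤ) ≠ 0 := by exact_mod_cast (Fact.out : p.Prime).ne_zero
  have h1 : (p : ℤ) * (X.updateCol j v).det = f j * X.det := by
    rw [← det_updateCol_smul, ← hf, ← cramer_apply, cramer_eq_adjugate_mulVec, mulVec_mulVec,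
      adjugate_mul, smul_mulVec, one_mulVec]
    simp [mul_comm]
  have h2 : (p : ℤ) ∣ (X.updateCol j v).det := by
    rw [← det_eq_zero_mod, ← det_transpose, ← exists_mulVec_eq_zero_iff]
    refine ⟨x, hx, ?_⟩
    ext k
    by_cases hk : k = j
    · subst hk
      rw [Pi.zero_apply, ← hxv]
      simp [mulVec, dotProduct]
    · have := congrFun hxX k
      rw [← this]
      simp [mulVec, dotProduct, hk]
  have hfj : IsCoprime ((p : ℤ) ^ 2) (f j) := by
    apply IsCoprime.pow_left
    refine ((Nat.prime_iff_prime_int.mp (Fact.out : p.Prime)).coprime_iff_not_dvd).mpr ?_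
    rwa [← ZMod.intCast_zmod_eq_zero_iff_dvd]
  apply hfj.dvd_of_dvd_mul_left
  rw [← h1, sq]
  exact mul_dvd_mul_left _ h2

end general

/-! ### Krylov spaces -/

section field
variable {ι F : Type*} [Fintype ι] [DecidableEq ι] [Field F]

/-- The Krylov space spanned by `e, Ae, …, A^{t-1}e`. -/
def krySpan (A : Matrix ι ι F) (t : ℕ) : Submodule F (ι → F) :=
  Submodule.span F (kry A '' Set.Iio t)

theorem kry_mem_krySpan (A : Matrix ι ι F) {k t : ℕ} (h : k < t) : kry A k ∈ krySpan A t :=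
  Submodule.subset_span ⟨k, h, rfl⟩

theorem krySpan_mono (A : Matrix ι ι F) {s t : ℕ} (h : s ≤ t) : krySpan A s ≤ krySpan A t :=
  Submodule.span_mono (Set.image_mono (Set.Iio_subset_Iio h))

theorem finrank_krySpan_le (A : Matrix ι ι F) (t : ℕ) :
    Module.finrank F (krySpan A t) ≤ t := by
  have h : kry A '' Set.Iio t = Set.range (fun i : Fin t => kry A i) := by
    ext x
    simp only [Set.mem_image, Set.mem_Iio, Set.mem_range]
    exact ⟨fun ⟨k, hk, h⟩ => ⟨⟨k, hk⟩, h⟩, fun ⟨k, h⟩ => ⟨k, k.2, h⟩⟩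
  rw [krySpan, h]
  exact (finrank_range_le_card _).trans (by simp)

theorem kry_mem_of_closed (A : Matrix ι ι F) {t : ℕ} (h : kry A t ∈ krySpan A t) (k : ℕ) :
    kry A k ∈ krySpan A t := by
  have hinv : ∀ v ∈ krySpan A t, A *ᵥ v ∈ krySpan A t := by
    intro v hv
    induction hv using Submodule.span_induction with
    | mem x hx =>
      obtain ⟨k, hk, rfl⟩ := hx
      rw [← kry_succ]
      rcases Nat.lt_or_ge (k + 1) t with h1 | h1
      · exact kry_mem_krySpan A h1
      · have : k + 1 = t := by have := Set.mem_Iio.mp hk; omega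
        rwa [this]
    | zero => simp
    | add x y _ _ hx hy => rw [mulVec_add]; exact add_mem hx hy
    | smul a x _ hx => rw [mulVec_smul]; exact Submodule.smul_mem _ _ hx
  induction k with
  | zero =>
    rcases Nat.eq_zero_or_pos t with h0 | h0
    · subst h0; exact h
    · exact kry_mem_krySpan A h0
  | succ k ih => rw [kry_succ]; exact hinv _ ih

/-- If the first `m + 1` Krylov vectors are linearly dependent, the first `m` span the whole
Krylov space. -/
theorem kry_mem_of_dependent (A : Matrix ι ι F) (m : ℕ)
    (h : ¬ LinearIndependent F (fun i : Fin (m + 1) => kry A i)) (k : ℕ) :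
    kry A k ∈ krySpan A m := by
  have key : ∃ t ≤ m, kry A t ∈ krySpan A t := by
    clear k
    induction m with
    | zero =>
      refine ⟨0, le_rfl, ?_⟩
      by_contra hc
      apply h
      rw [linearIndependent_finSucc']
      refine ⟨linearIndependent_empty_type, fun hm => hc ?_⟩
      refine Submodule.span_mono ?_ hm
      rintro _ ⟨i, rfl⟩
      exact i.elim0
    | succ m ih =>
      by_cases h1 : LinearIndependent F (fun i : Fin (m + 1) => kry A i)
      · refine ⟨m + 1, le_rfl, ?_⟩
        by_contra hc
        apply h
        rw [linearIndependent_finSucc']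
        refine ⟨h1, fun hm => hc ?_⟩
        refine Submodule.span_mono ?_ hm
        rintro _ ⟨i, rfl⟩
        exact ⟨i, i.2, rfl⟩
      · obtain ⟨t, ht, h2⟩ := ih h1
        exact ⟨t, by omega, h2⟩
  obtain ⟨t, ht, h2⟩ := key
  exact krySpan_mono A ht (kry_mem_of_closed A h2 k)

/-- A vector outside a subspace is separated from it by some dot product. -/
theorem exists_dot_ne_zero (S : Submodule F (ι → F)) {x : ι → F} (hx : x ∉ S) :
    ∃ v : ι → F, (∀ s ∈ S, s ⬝ᵥ v = 0) ∧ x ⬝ᵥ v ≠ 0 := by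
  obtain ⟨f, hf, hS⟩ := Submodule.exists_le_ker_of_notMem hx
  have hv : ∀ y : ι → F, f y = y ⬝ᵥ (fun i => f (Pi.single i 1)) := by
    intro y
    rw [LinearMap.pi_apply_eq_sum_univ f y]
    simp [dotProduct, ← Pi.single_apply, Pi.single_comm]
  refine ⟨fun i => f (Pi.single i 1), fun s hs => ?_, ?_⟩
  · rw [← hv]; exact hS hs
  · rw [← hv]; exact hf

/-- The orthogonal complement of the Krylov space `krySpan A t` for the dot product. -/
def kryPerp (A : Matrix ι ι F) (t : ℕ) : Submodule F (ι → F) where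
  carrier := {x | ∀ k < t, kry A k ⬝ᵥ x = 0}
  add_mem' := fun hx hy k hk => by rw [dotProduct_add, hx k hk, hy k hk, add_zero]
  zero_mem' := fun k _ => dotProduct_zero _
  smul_mem' := fun c x hx k hk => by rw [dotProduct_smul, hx k hk, smul_zero]

theorem mem_kryPerp {A : Matrix ι ι F} {t : ℕ} {x : ι → F} :
    x ∈ kryPerp A t ↔ ∀ k < t, kry A k ⬝ᵥ x = 0 := Iff.rfl

theorem finrank_krySpan_add_kryPerp (A : Matrix ι ι F) (t : ℕ) :
    Module.finrank F (krySpan A t) + Module.finrank F (kryPerp A t) = Fintype.card ι := by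
  let M : Matrix (Fin t) ι F := Matrix.of fun i => kry A i
  have h1 : Module.finrank F (krySpan A t) = M.rank := by
    rw [rank_eq_finrank_span_row]
    have : kry A '' Set.Iio t = Set.range M.row := by
      ext x
      simp only [Set.mem_image, Set.mem_Iio, Set.mem_range]
      exact ⟨fun ⟨k, hk, h⟩ => ⟨⟨k, hk⟩, h⟩, fun ⟨k, h⟩ => ⟨k, k.2, h⟩⟩
    rw [krySpan, this]
  have h2 : kryPerp A t = LinearMap.ker M.mulVecLin := by
    ext x
    rw [mem_kryPerp, LinearMap.mem_ker, mulVecLin_apply]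
    constructor
    · intro h; ext i; exact h i i.2
    · intro h k hk; exact congrFun h ⟨k, hk⟩
  rw [h1, h2, Matrix.rank, LinearMap.finrank_range_add_finrank_ker,
    Module.finrank_fintype_fun_eq_card]

end field

section rank
variable {n : ℕ}

theorem map_symm' {A : Matrix (Fin (n + 2)) (Fin (n + 2)) ℤ} {R : Type*} [CommRing R]
    (hA : A.IsSymm) : (A.map (Int.castRingHom R)).IsSymm := by
  rw [IsSymm, ← transpose_map, hA]

/-- A lower bound for the dimension of the Krylov space modulo `p` in terms of the power of `p`
dividing a bordered walk determinant. -/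
theorem le_finrank_krySpan (A : Matrix (Fin (n + 2)) (Fin (n + 2)) ℤ) (v : Fin (n + 2) → ℤ)
    (p r : ℕ) [Fact p.Prime] (h : ¬ (p : ℤ) ^ (r + 1) ∣ (hat A v).det) :
    n + 1 ≤ Module.finrank (ZMod p) (krySpan (A.map (Int.castRingHom (ZMod p))) (n + 1)) + r := by
  have h1 := finrank_ker_le _ p r h
  have h2 := LinearMap.finrank_range_add_finrank_ker
    ((hat A v).map (Int.castRingHom (ZMod p))).mulVecLin
  rw [Module.finrank_fintype_fun_eq_card, Fintype.card_fin] at h2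
  rw [hat_map] at h1 h2
  set Ab := A.map (Int.castRingHom (ZMod p))
  set vb : Fin (n + 2) → ZMod p := fun i => Int.castRingHom (ZMod p) (v i)
  have h3 : LinearMap.range (hat Ab vb).mulVecLin ≤
      krySpan Ab (n + 1) ⊔ Submodule.span (ZMod p) {vb} := by
    rintro _ ⟨f, rfl⟩
    rw [mulVecLin_apply, hat_mulVec]
    refine Submodule.add_mem_sup ?_ ?_
    · exact Submodule.sum_mem _ fun j _ => Submodule.smul_mem _ _ (kry_mem_krySpan _ j.2)
    · exact Submodule.smul_mem _ _ (Submodule.mem_span_singleton_self _)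
  have h4 := Submodule.finrank_mono h3
  have h5 := Submodule.finrank_add_le_finrank_add_finrank (krySpan Ab (n + 1))
    (Submodule.span (ZMod p) {vb})
  have h6 := finrank_span_le_card (R := ZMod p) {vb}
  simp only [Set.toFinset_singleton, Finset.card_singleton] at h6
  omega

end rank

/-! ### The rational orthogonal matrix -/

section rational
variable {n : ℕ}

/-- The matrix `B` inherits a vector orthogonal to its walk vectors. Its norm can be normalized to `2`
over `ℚ` because `det (gram A) * 2` and `det (gram A) * (β ⬝ᵥ β)` are both squares. -/
theorem exists_beta {A B : Matrix (Fin (n + 2)) (Fin (n + 2)) ℚ} (hA : A.IsSymm) (hB : B.IsSymm)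
    (hm : ∀ k, mom A k = mom B k) {a : Fin (n + 2) → ℚ} (ha : ∀ k, kry A k ⬝ᵥ a = 0)
    (haa : a ⬝ᵥ a = 2) (hdet : (hat A a).det ≠ 0) :
    ∃ β : Fin (n + 2) → ℚ, (∀ k < n + 2, kry B k ⬝ᵥ β = 0) ∧ β ⬝ᵥ β = 2 := by
  let WA : Matrix (Fin (n + 2)) (Fin (n + 2)) ℚ := Matrix.of fun i j => kry A j i
  let WB : Matrix (Fin (n + 2)) (Fin (n + 2)) ℚ := Matrix.of fun i j => kry B j i
  have hW : WAᵀ * WA = WBᵀ * WB := by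
    ext i j
    have h1 : (WAᵀ * WA) i j = kry A i ⬝ᵥ kry A j := by
      simp [WA, Matrix.mul_apply, dotProduct]
    have h2 : (WBᵀ * WB) i j = kry B i ⬝ᵥ kry B j := by
      simp [WB, Matrix.mul_apply, dotProduct]
    rw [h1, h2, kry_dotProduct_kry hA, kry_dotProduct_kry hB, hm]
  have ha0 : a ≠ 0 := by rintro rfl; simp at haa
  have h1 : WAᵀ.det = 0 := by
    rw [← exists_mulVec_eq_zero_iff]
    exact ⟨a, ha0, by ext j; exact ha j⟩
  have h2 : WBᵀ.det = 0 := by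
    have h3 := congrArg det hW
    rw [det_mul, det_mul, h1, zero_mul, det_transpose] at h3
    rw [det_transpose]
    exact mul_self_eq_zero.mp h3.symm
  obtain ⟨β, hβ0, hβ⟩ := exists_mulVec_eq_zero_iff.mpr h2
  have hβ' : ∀ k < n + 2, kry B k ⬝ᵥ β = 0 := fun k hk => congrFun hβ ⟨k, hk⟩
  have e1 := det_hat_sq hA (v := a) (fun k _ => ha k)
  have e2 := det_hat_sq hB (v := β) (fun k hk => hβ' k (by omega))
  have hg : gram A = gram B := by ext i j; exact hm _
  rw [← hg] at e2
  rw [haa] at e1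
  have hs : β ⬝ᵥ β ≠ 0 := fun h => hβ0 (dotProduct_self_eq_zero.mp h)
  have hgne : (gram A).det ≠ 0 := by
    intro h; rw [h, zero_mul] at e1; exact hdet (pow_eq_zero_iff (by norm_num) |>.mp e1)
  have hd : (hat B β).det ≠ 0 := by
    intro h
    rw [h, zero_pow (by norm_num)] at e2
    exact mul_ne_zero hgne hs e2.symm
  refine ⟨((hat A a).det / (hat B β).det) • β, fun k hk => by rw [dotProduct_smul, hβ' k hk, smul_zero], ?_⟩
  rw [dotProduct_smul, smul_dotProduct, smul_eq_mul, smul_eq_mul, ← mul_assoc, ← sq, div_pow, e1, e2]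
  field_simp

/-- Two symmetric matrices with the same trace and the same walk counts `eᵀ A^k e`, the first of
which has an almost controllable walk matrix, are intertwined by an orthogonal matrix that matches
their Krylov vectors. -/
theorem exists_orthogonal {A B : Matrix (Fin (n + 2)) (Fin (n + 2)) ℚ} (hA : A.IsSymm)
    (hB : B.IsSymm) (htr : A.trace = B.trace)
    (hm : ∀ k, mom A k = mom B k) {a : Fin (n + 2) → ℚ} (ha : ∀ k, kry A k ⬝ᵥ a = 0)
    (haa : a ⬝ᵥ a = 2) (hdet : (hat A a).det ≠ 0) :
    ∃ Q : Matrix (Fin (n + 2)) (Fin (n + 2)) ℚ, Qᵀ * Q = 1 ∧ A * Q = Q * B ∧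
      ∀ k, Q *ᵥ kry B k = kry A k := by
  obtain ⟨β, hβ, hββ⟩ := exists_beta hA hB hm ha haa hdet
  have hg : gram A = gram B := by ext i j; exact hm _
  have hgr : (hat A a)ᵀ * hat A a = (hat B β)ᵀ * hat B β := by
    ext i j
    rw [hat_gram_apply hA (fun k _ => ha k), hat_gram_apply hB (fun k hk => hβ k (by omega)),
      hg, haa, hββ]
  have hdB : (hat B β).det ≠ 0 := by
    intro h
    have := congrArg det hgr
    rw [det_mul, det_mul, h, mul_zero, det_transpose] at this
    exact hdet (mul_self_eq_zero.mp this)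
  have hu : IsUnit (hat B β).det := isUnit_iff_ne_zero.mpr hdB
  have huA : IsUnit (hat A a).det := isUnit_iff_ne_zero.mpr hdet
  set Q : Matrix (Fin (n + 2)) (Fin (n + 2)) ℚ := hat A a * (hat B β)⁻¹ with hQ
  have hQh : Q * hat B β = hat A a := by
    rw [hQ, mul_assoc, nonsing_inv_mul _ hu, mul_one]
  have hQQ : Qᵀ * Q = 1 := by
    have : Qᵀ * Q = ((hat B β)⁻¹)ᵀ * ((hat A a)ᵀ * hat A a) * (hat B β)⁻¹ := by
      rw [hQ, transpose_mul]; simp only [mul_assoc]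
    rw [this, hgr, ← mul_assoc, ← transpose_mul, mul_nonsing_inv _ hu, transpose_one, one_mul,
      mul_nonsing_inv _ hu]
  clear_value Q
  have hk1 : ∀ k < n + 1, Q *ᵥ kry B k = kry A k := by
    intro k hk
    ext i
    have := congrFun (congrFun hQh i) (Fin.castSucc ⟨k, hk⟩)
    rw [hat_castSucc, Matrix.mul_apply] at this
    simp only [hat_castSucc] at this
    exact this
  have hQb : Q *ᵥ β = a := by
    ext i
    have := congrFun (congrFun hQh i) (Fin.last _)
    rw [hat_last, Matrix.mul_apply] at this
    simpa [mulVec, dotProduct] using this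
  have hQdot : ∀ u v, (Q *ᵥ u) ⬝ᵥ (Q *ᵥ v) = u ⬝ᵥ v := by
    intro u v
    rw [dotProduct_mulVec, ← mulVec_transpose, mulVec_mulVec, hQQ, one_mulVec]
  have hinj : ∀ x, (∀ k < n + 1, kry A k ⬝ᵥ x = 0) → a ⬝ᵥ x = 0 → x = 0 := by
    intro x h1 h2
    have h3 := hat_transpose_mulVec_eq_zero h1 h2
    by_contra hx
    have := exists_mulVec_eq_zero_iff.mp ⟨x, hx, h3⟩
    rw [det_transpose] at this
    exact hdet this
  have hk2 : ∀ k < n + 2, Q *ᵥ kry B k = kry A k := by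
    intro k hk
    rw [← sub_eq_zero]
    apply hinj
    · intro j hj
      rw [dotProduct_sub, kry_dotProduct_kry hA]
      nth_rewrite 1 [← hk1 j hj]
      rw [hQdot, kry_dotProduct_kry hB, hm, sub_self]
    · rw [dotProduct_sub, dotProduct_comm a (kry A k), ha]
      nth_rewrite 1 [← hQb]
      rw [hQdot, dotProduct_comm, hβ k hk, sub_self]
  have hQt : ∀ k < n + 2, Qᵀ *ᵥ kry A k = kry B k := by
    intro k hk
    rw [← hk2 k hk, mulVec_mulVec, hQQ, one_mulVec]
  set R : Matrix (Fin (n + 2)) (Fin (n + 2)) ℚ := A - Q * B * Qᵀ with hR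
  have hRs : R.IsSymm := by
    rw [IsSymm, hR, transpose_sub, transpose_mul _ Qᵀ, transpose_mul Q, transpose_transpose, hA, hB,
      mul_assoc]
  have hRk : ∀ k < n + 1, R *ᵥ kry A k = 0 := by
    intro k hk
    rw [hR, sub_mulVec, ← kry_succ, ← mulVec_mulVec, hQt k (by omega), ← mulVec_mulVec, ← kry_succ,
      hk2 _ (by omega), sub_self]
  have hRa : R *ᵥ a = ((a ⬝ᵥ (R *ᵥ a)) / 2) • a := by
    rw [← sub_eq_zero]
    apply hinj
    · intro k hk
      rw [dotProduct_sub, ← mulVec_dotProduct_symm hRs, hRk k hk, zero_dotProduct, dotProduct_smul,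
        ha, smul_zero, sub_zero]
    · rw [dotProduct_sub, dotProduct_smul, haa, smul_eq_mul]; ring
  set κ := (a ⬝ᵥ (R *ᵥ a)) / 2 with hκ
  have hvv : ∀ u, vecMulVec a a *ᵥ u = (a ⬝ᵥ u) • a := by
    intro u; ext i
    simp [mulVec, dotProduct, vecMulVec_apply, Finset.mul_sum, mul_comm, mul_left_comm]
  have hR0 : R - (κ / 2) • vecMulVec a a = 0 := by
    have hz : (R - (κ / 2) • vecMulVec a a) * hat A a = 0 := by
      ext i j
      have h1 : ((R - (κ / 2) • vecMulVec a a) * hat A a) i j =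
          ((R - (κ / 2) • vecMulVec a a) *ᵥ (fun l => hat A a l j)) i := by
        rw [Matrix.mul_apply]; rfl
      rw [h1]
      clear h1
      refine Fin.lastCases ?_ (fun j => ?_) j
      · simp only [hat_last]
        rw [show (fun l => a l) = a from rfl, sub_mulVec, smul_mulVec, hvv, haa, hRa]
        simp only [Pi.sub_apply, Pi.smul_apply, smul_eq_mul, Matrix.zero_apply]
        ring
      · simp only [hat_castSucc]
        rw [show (fun l => kry A j l) = kry A j from rfl, sub_mulVec, smul_mulVec, hvv,
          hRk j j.2, dotProduct_comm, ha]
        simp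
    have := congrArg (· * (hat A a)⁻¹) hz
    simpa only [mul_assoc, mul_nonsing_inv _ huA, mul_one, zero_mul] using this
  have hκ0 : κ = 0 := by
    have h1 := congrArg trace hR0
    rw [trace_sub, trace_smul, trace_vecMulVec, haa, hR, trace_sub, trace_mul_comm, ← mul_assoc, hQQ,
      one_mul, htr, trace_zero, sub_self, smul_eq_mul] at h1
    linarith
  have hRz : A = Q * B * Qᵀ := by
    rw [hκ0, zero_div, zero_smul, sub_zero, hR] at hR0
    exact sub_eq_zero.mp hR0
  have hAQ : A * Q = Q * B := by
    conv_lhs => rw [hRz]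
    rw [mul_assoc, hQQ, mul_one]
  refine ⟨Q, hQQ, hAQ, fun k => ?_⟩
  induction k with
  | zero => exact hk2 0 (by omega)
  | succ k ih => rw [kry_succ, mulVec_mulVec, ← hAQ, ← mulVec_mulVec, ih, kry_succ]

end rational

/-! ### Krylov vectors of polynomials, and matrices annihilated by the walk vectors -/

section fieldlemmas
open Polynomial

theorem exists_smul_of_finrank_le_one {F V : Type*} [Field F] [AddCommGroup V] [Module F V]
    [FiniteDimensional F V] {K : Submodule F V} (hK : Module.finrank F K ≤ 1) {v w : V}
    (hv : v ∈ K) (hv0 : v ≠ 0) (hw : w ∈ K) : ∃ c : F, w = c • v := by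
  have h1 : Submodule.span F {v} ≤ K := by
    rw [Submodule.span_singleton_le_iff_mem]; exact hv
  have h2 : Submodule.span F {v} = K :=
    Submodule.eq_of_le_of_finrank_le h1 (by rw [finrank_span_singleton hv0]; exact hK)
  rw [← h2, Submodule.mem_span_singleton] at hw
  obtain ⟨c, hc⟩ := hw
  exact ⟨c, hc.symm⟩

/-- The Krylov vector `g(A) e` attached to a polynomial `g`. -/
noncomputable def ev {ι F : Type*} [Fintype ι] [DecidableEq ι] [Field F] (A : Matrix ι ι F)
    (g : F[X]) : ι → F :=
  aeval A g *ᵥ 1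

section ev
variable {ι F : Type*} [Fintype ι] [DecidableEq ι] [Field F] (A : Matrix ι ι F)

theorem ev_add (g h : F[X]) : ev A (g + h) = ev A g + ev A h := by
  simp [ev, add_mulVec]

theorem ev_sub (g h : F[X]) : ev A (g - h) = ev A g - ev A h := by
  simp [ev, sub_mulVec]

theorem ev_smul (c : F) (g : F[X]) : ev A (c • g) = c • ev A g := by
  simp [ev, smul_mulVec]

theorem ev_zero : ev A 0 = 0 := by simp [ev]

theorem ev_X_pow (k : ℕ) : ev A (X ^ k) = kry A k := by simp [ev, kry]

theorem ev_shift (μ : F) (g : F[X]) : ev A ((X - C μ) * g) = A *ᵥ ev A g - μ • ev A g := by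
  simp [ev, sub_mul, sub_mulVec, ← mulVec_mulVec, Algebra.algebraMap_eq_smul_one, smul_mulVec]

theorem ev_eq_sum {g : F[X]} {t : ℕ} (hg : g.degree < t) :
    ev A g = ∑ j : Fin t, g.coeff j • kry A j := by
  rw [Fin.sum_univ_eq_sum_range (fun j => g.coeff j • kry A j) t]
  rcases eq_or_ne g 0 with rfl | h0
  · simp [ev_zero]
  have hd : g.natDegree < t := (natDegree_lt_iff_degree_lt h0).mpr hg
  conv_lhs => rw [ev, aeval_eq_sum_range' hd, sum_mulVec]
  simp [smul_mulVec, kry]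

theorem exists_ev_of_mem_krySpan {t : ℕ} {x : ι → F} (hx : x ∈ krySpan A t) :
    ∃ g : F[X], g.degree < t ∧ ev A g = x := by
  induction hx using Submodule.span_induction with
  | mem x hx =>
    obtain ⟨k, hk, rfl⟩ := hx
    refine ⟨X ^ k, ?_, ev_X_pow A k⟩
    rw [degree_X_pow]
    exact_mod_cast hk
  | zero => exact ⟨0, by simp, ev_zero A⟩
  | add x y _ _ hx hy =>
    obtain ⟨g, hg, rfl⟩ := hx
    obtain ⟨h, hh, rfl⟩ := hy
    exact ⟨g + h, (degree_add_le _ _).trans_lt (max_lt hg hh), ev_add A g h⟩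
  | smul a x _ hx =>
    obtain ⟨g, hg, rfl⟩ := hx
    exact ⟨a • g, (degree_smul_le _ _).trans_lt hg, ev_smul A a g⟩

theorem kry_dot_ev {A B : Matrix ι ι F} (hA : A.IsSymm) (hB : B.IsSymm)
    (hm : ∀ k, mom A k = mom B k) (g : F[X]) (k : ℕ) :
    kry A k ⬝ᵥ ev A g = kry B k ⬝ᵥ ev B g := by
  have h : g.degree < (g.natDegree + 1 : ℕ) :=
    degree_le_natDegree.trans_lt (by exact_mod_cast Nat.lt_succ_self _)
  rw [ev_eq_sum A h, ev_eq_sum B h, dotProduct_sum, dotProduct_sum]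
  refine Finset.sum_congr rfl fun j _ => ?_
  rw [dotProduct_smul, dotProduct_smul, kry_dotProduct_kry hA, kry_dotProduct_kry hB, hm]

theorem dot_ev_eq_zero {a : ι → F} (ha : ∀ k, kry A k ⬝ᵥ a = 0) (g : F[X]) : a ⬝ᵥ ev A g = 0 := by
  have h : g.degree < (g.natDegree + 1 : ℕ) :=
    degree_le_natDegree.trans_lt (by exact_mod_cast Nat.lt_succ_self _)
  rw [ev_eq_sum A h, dotProduct_sum]
  refine Finset.sum_eq_zero fun j _ => ?_
  rw [dotProduct_smul, dotProduct_comm, ha, smul_zero]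

theorem exists_ev_eq_zero {t : ℕ} (h : ¬ LinearIndependent F (fun i : Fin t => kry A i)) :
    ∃ g : F[X], g ≠ 0 ∧ g.degree < t ∧ ev A g = 0 := by
  rw [Fintype.not_linearIndependent_iff] at h
  obtain ⟨f, hf, i, hi⟩ := h
  have hc : ∀ j : Fin t, (∑ l : Fin t, C (f l) * X ^ (l : ℕ)).coeff j = f j := by
    intro j
    simp [coeff_X_pow, Fin.val_inj]
  have hd : (∑ l : Fin t, C (f l) * X ^ (l : ℕ)).degree < (t : WithBot ℕ) :=
    degree_sum_fin_lt f
  refine ⟨∑ l : Fin t, C (f l) * X ^ (l : ℕ), ?_, hd, ?_⟩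
  · intro h0
    apply hi
    rw [← hc, h0, coeff_zero]
  · rw [ev_eq_sum A hd, ← hf]
    simp only [hc]

end ev

section odd
variable {n : ℕ} {F : Type*} [Field F] {A B P : Matrix (Fin (n + 2)) (Fin (n + 2)) F}
  {a x : Fin (n + 2) → F}

theorem dot_sub_proj (h2 : (2 : F) ≠ 0) (haa : a ⬝ᵥ a = 2) (v : Fin (n + 2) → F) :
    a ⬝ᵥ (v - ((a ⬝ᵥ v) / 2) • a) = 0 := by
  rw [dotProduct_sub, dotProduct_smul, haa, smul_eq_mul, div_mul_cancel₀ _ h2, sub_self]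

/-- A vector orthogonal to the walk vectors, once made orthogonal to `a`, is in the left kernel of the
bordered walk matrix. -/
theorem hat_transpose_proj (h2 : (2 : F) ≠ 0) (ha : ∀ k, kry A k ⬝ᵥ a = 0) (haa : a ⬝ᵥ a = 2)
    {v : Fin (n + 2) → F} (hv : ∀ k < n + 1, kry A k ⬝ᵥ v = 0) :
    (hat A a)ᵀ *ᵥ (v - ((a ⬝ᵥ v) / 2) • a) = 0 := by
  apply hat_transpose_mulVec_eq_zero
  · intro k hk
    rw [dotProduct_sub, dotProduct_smul, ha, hv k hk, smul_zero, sub_zero]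
  · exact dot_sub_proj h2 haa v

theorem eq_zero_of_det_ne_zero (h2 : (2 : F) ≠ 0) (ha : ∀ k, kry A k ⬝ᵥ a = 0) (haa : a ⬝ᵥ a = 2)
    (hdet : (hat A a).det ≠ 0) (hPk : ∀ k, Pᵀ *ᵥ kry A k = 0) (hPP : Pᵀ * P = 0) : P = 0 := by
  have hcol : ∀ j, (fun i => P i j) = 0 := by
    intro j
    have hq : ∀ k < n + 1, kry A k ⬝ᵥ (fun i => P i j) = 0 := by
      intro k _
      rw [dotProduct_comm]; exact congrFun (hPk k) j
    have h1 := hat_transpose_proj h2 ha haa hq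
    have h3 : (fun i => P i j) - ((a ⬝ᵥ fun i => P i j) / 2) • a = 0 := by
      by_contra hne
      have := exists_mulVec_eq_zero_iff.mp ⟨_, hne, h1⟩
      rw [det_transpose] at this
      exact hdet this
    have h4 : (fun i => P i j) = ((a ⬝ᵥ fun i => P i j) / 2) • a := sub_eq_zero.mp h3
    have h5 : (fun i => P i j) ⬝ᵥ (fun i => P i j) = 0 := congrFun (congrFun hPP j) j
    set t := (a ⬝ᵥ fun i => P i j) / 2
    rw [h4, dotProduct_smul, smul_dotProduct, haa, smul_eq_mul, smul_eq_mul] at h5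
    have ht : t = 0 := by
      rcases mul_eq_zero.mp h5 with h | h
      · exact h
      · exact (mul_eq_zero.mp h).resolve_right h2
    rw [h4, ht, zero_smul]
  ext i j
  exact congrFun (hcol j) i

/-- When the left kernel of the bordered walk matrix is the line spanned by an eigenvector `x` whose
eigenvalue differs from `lam`, the matrix `P` has rank one with column space spanned by `x`. -/
theorem rank_one_structure (h2 : (2 : F) ≠ 0) (hB : B.IsSymm)
    (ha : ∀ k, kry A k ⬝ᵥ a = 0)
    (haa : a ⬝ᵥ a = 2) {lam μ : F} (hAa : A *ᵥ a = lam • a) (hx0 : x ≠ 0) (hax : a ⬝ᵥ x = 0)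
    (hAx : A *ᵥ x = μ • x) (hμ : μ ≠ lam)
    (hker : ∀ v, (hat A a)ᵀ *ᵥ v = 0 → ∃ t : F, v = t • x)
    (hPk : ∀ k, Pᵀ *ᵥ kry A k = 0) (hPP : Pᵀ * P = 0) (hAP : A * P = P * B) (hP : P ≠ 0) :
    ∃ y : Fin (n + 2) → F, y ≠ 0 ∧ x ⬝ᵥ x = 0 ∧ B *ᵥ y = μ • y ∧ ∀ i j, P i j = x i * y j := by
  have hcol : ∀ j, ∃ s y : F, (fun i => P i j) = s • a + y • x := by
    intro j
    have hq : ∀ k < n + 1, kry A k ⬝ᵥ (fun i => P i j) = 0 := by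
      intro k _
      rw [dotProduct_comm]; exact congrFun (hPk k) j
    obtain ⟨t, ht⟩ := hker _ (hat_transpose_proj h2 ha haa hq)
    exact ⟨_, t, by rw [← ht]; abel⟩
  choose s y hsy using hcol
  have hP' : ∀ i j, P i j = s j * a i + y j * x i := fun i j => congrFun (hsy j) i
  have hcoef : ∀ c d : F, c • a + d • x = 0 → c = 0 ∧ d = 0 := by
    intro c d h
    have h1 := congrArg (fun v => a ⬝ᵥ v) h
    simp only [dotProduct_add, dotProduct_smul, haa, hax, dotProduct_zero, smul_eq_mul, mul_zero,
      add_zero] at h1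
    have hc := (mul_eq_zero.mp h1).resolve_right h2
    rw [hc, zero_smul, zero_add] at h
    exact ⟨hc, (smul_eq_zero.mp h).resolve_right hx0⟩
  have hBsy : ∀ j, (B *ᵥ s) j = lam * s j ∧ (B *ᵥ y) j = μ * y j := by
    intro j
    have h1 : A *ᵥ (fun i => P i j) = (B *ᵥ s) j • a + (B *ᵥ y) j • x := by
      ext i
      have h3 : (A *ᵥ (fun i => P i j)) i = (A * P) i j := by rw [Matrix.mul_apply]; rfl
      rw [h3, hAP, Matrix.mul_apply]
      simp only [hP', Pi.add_apply, Pi.smul_apply, smul_eq_mul, mulVec, dotProduct, Finset.sum_mul,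
        ← Finset.sum_add_distrib]
      refine Finset.sum_congr rfl fun l _ => ?_
      rw [hB.apply l j]
      ring
    rw [hsy j, mulVec_add, mulVec_smul, mulVec_smul, hAa, hAx] at h1
    have h4 := hcoef ((B *ᵥ s) j - lam * s j) ((B *ᵥ y) j - μ * y j) (by
      rw [sub_smul, sub_smul, mul_comm lam, mul_comm μ, mul_smul, mul_smul]
      rw [sub_add_sub_comm, ← h1, sub_self])
    exact ⟨sub_eq_zero.mp h4.1, sub_eq_zero.mp h4.2⟩
  have hQ : ∀ i j, 2 * (s i * s j) + (x ⬝ᵥ x) * (y i * y j) = 0 := by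
    intro i j
    have h5 : (fun l => P l i) ⬝ᵥ (fun l => P l j) = 0 := congrFun (congrFun hPP i) j
    rw [hsy i, hsy j] at h5
    simp only [dotProduct_add, add_dotProduct, smul_dotProduct, dotProduct_smul, haa, hax,
      dotProduct_comm x a, smul_eq_mul] at h5
    linear_combination h5
  have hs : ∀ i, s i = 0 := by
    intro i
    by_contra hi
    have h6 : s = (-(x ⬝ᵥ x) * y i / (2 * s i)) • y := by
      ext j
      rw [Pi.smul_apply, smul_eq_mul]
      field_simp
      linear_combination hQ i j
    have h7 : (B *ᵥ s) i = μ * s i := by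
      have h8 : B *ᵥ y = μ • y := by ext j; exact (hBsy j).2
      generalize (-(x ⬝ᵥ x) * y i / (2 * s i)) = c at h6
      rw [h6, mulVec_smul, h8]
      simp only [Pi.smul_apply, smul_eq_mul]; ring
    rw [(hBsy i).1] at h7
    exact hμ (mul_right_cancel₀ hi h7).symm
  have hP2 : ∀ i j, P i j = x i * y j := fun i j => by rw [hP', hs, zero_mul, zero_add, mul_comm]
  have hy : y ≠ 0 := by
    rintro rfl
    apply hP
    ext i j
    simp [hP2]
  refine ⟨y, hy, ?_, ?_, hP2⟩
  · obtain ⟨j, hj⟩ := Function.ne_iff.mp hy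
    have := hQ j j
    rw [hs, mul_zero, mul_zero, zero_add] at this
    exact (mul_eq_zero.mp this).resolve_right (mul_ne_zero hj hj)
  · ext j; exact (hBsy j).2

/-- An isotropic left kernel vector `x` lies in the Krylov space, since it is orthogonal to the whole
orthogonal complement of that space, which is spanned by `a` and `x`. -/
theorem mem_krySpan_of_isotropic (h2 : (2 : F) ≠ 0)
    (ha : ∀ k, kry A k ⬝ᵥ a = 0) (haa : a ⬝ᵥ a = 2) (hax : a ⬝ᵥ x = 0) (hxx : x ⬝ᵥ x = 0)
    (hker : ∀ v, (hat A a)ᵀ *ᵥ v = 0 → ∃ t : F, v = t • x)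
    (hdet : (hat A a).det = 0) : x ∈ krySpan A n := by
  have hdep : ¬ LinearIndependent F (fun i : Fin (n + 1) => kry A i) := by
    obtain ⟨f, hf0, hf⟩ := exists_mulVec_eq_zero_iff.mpr hdet
    rw [hat_mulVec] at hf
    have hl : f (Fin.last _) = 0 := by
      have h1 := congrArg (fun v => v ⬝ᵥ a) hf
      simp only [add_dotProduct, sum_dotProduct, smul_dotProduct, ha, smul_eq_mul, mul_zero,
        Finset.sum_const_zero, zero_add, haa, zero_dotProduct] at h1
      exact (mul_eq_zero.mp h1).resolve_right h2
    rw [hl, zero_smul, add_zero] at hf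
    rw [Fintype.not_linearIndependent_iff]
    refine ⟨fun j => f j.castSucc, hf, ?_⟩
    by_contra hc
    push Not at hc
    apply hf0
    ext j
    refine Fin.lastCases hl (fun j => hc j) j
  by_contra hx
  obtain ⟨v, hv, hxv⟩ := exists_dot_ne_zero _ hx
  have hv' : ∀ k < n + 1, kry A k ⬝ᵥ v = 0 := fun k _ => hv _ (kry_mem_of_dependent A n hdep k)
  obtain ⟨t, ht⟩ := hker _ (hat_transpose_proj h2 ha haa hv')
  have h3 : v = t • x + ((a ⬝ᵥ v) / 2) • a := by rw [← ht]; abel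
  apply hxv
  rw [h3, dotProduct_add, dotProduct_smul, dotProduct_smul, hxx, dotProduct_comm x a, hax]
  simp

/-- If `(B - μ) g(B) e` is nonzero, then `g(B) e` is a multiple of it; so it cannot be an eigenvector of
`B` for `μ`, as otherwise applying `B - μ` to `g(B) e` would give zero. -/
theorem no_nonzero_eigenvector (hA : A.IsSymm) (hB : B.IsSymm) (hm : ∀ k, mom A k = mom B k)
    (ha : ∀ k, kry A k ⬝ᵥ a = 0) {μ : F} (hxk : ∀ k, kry A k ⬝ᵥ x = 0)
    (hAx : A *ᵥ x = μ • x)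
    (hker : ∀ v, (hat A a)ᵀ *ᵥ v = 0 → ∃ t : F, v = t • x)
    (hker' : Module.finrank F (LinearMap.ker (hat A a).mulVecLin) ≤ 1)
    {g : F[X]} (hg : g.degree < n) (hg0 : g ≠ 0) (hgx : ev A g = x)
    (hu0 : ev B ((X - C μ) * g) ≠ 0)
    (hBu : B *ᵥ ev B ((X - C μ) * g) = μ • ev B ((X - C μ) * g)) : False := by
  set g0 := (X - C μ) * g with hg0'
  have hg00 : g0 ≠ 0 := mul_ne_zero (X_sub_C_ne_zero μ) hg0
  have hdg0 : g0.degree < (n + 1 : ℕ) := by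
    rw [hg0', degree_mul, degree_X_sub_C, add_comm, degree_eq_natDegree hg0]
    have := (natDegree_lt_iff_degree_lt hg0).mpr hg
    exact_mod_cast Nat.succ_lt_succ this
  have hAg0 : ev A g0 = 0 := by rw [hg0', ev_shift, hgx, hAx, sub_self]
  have hw : ∃ s : F, ev B g = s • ev B g0 := by
    by_cases hli : LinearIndependent F (fun i : Fin (n + 1) => kry B i)
    · have h1 : n + 1 ≤ Module.finrank F (krySpan B (n + 1)) := by
        have h3 := finrank_span_eq_card hli
        rw [Fintype.card_fin] at h3
        refine h3.symm.le.trans ?_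
        apply Submodule.finrank_mono
        rw [Submodule.span_le]
        rintro _ ⟨i, rfl⟩
        exact kry_mem_krySpan B i.2
      have h4 := finrank_krySpan_add_kryPerp B (n + 1)
      rw [Fintype.card_fin] at h4
      refine exists_smul_of_finrank_le_one (K := kryPerp B (n + 1)) (by omega) ?_ hu0 ?_
      · intro k _
        rw [← kry_dot_ev hA hB hm, hAg0, dotProduct_zero]
      · intro k _
        rw [← kry_dot_ev hA hB hm, hgx, hxk]
    · obtain ⟨f, hf0, hfd, hf⟩ := exists_ev_eq_zero B hli
      obtain ⟨a', ha'⟩ := hker (ev A f) (hat_transpose_mulVec_eq_zero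
        (fun k _ => by rw [kry_dot_ev hA hB hm, hf, dotProduct_zero]) (dot_ev_eq_zero A ha f))
      have h5 : ev A (f - a' • g) = 0 := by rw [ev_sub, ev_smul, hgx, ha', sub_self]
      have h6 : (f - a' • g).degree < (n + 1 : ℕ) := by
        refine (degree_sub_le _ _).trans_lt (max_lt hfd ?_)
        exact (degree_smul_le _ _).trans_lt (hg.trans (by exact_mod_cast Nat.lt_succ_self n))
      let vec : F[X] → (Fin (n + 2) → F) := fun h j => h.coeff j
      have hvec : ∀ h : F[X], h.degree < (n + 1 : ℕ) → ev A h = 0 →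
          vec h ∈ LinearMap.ker (hat A a).mulVecLin := by
        intro h hd he
        rw [LinearMap.mem_ker, mulVecLin_apply, hat_mulVec]
        have : vec h (Fin.last _) = 0 := coeff_eq_zero_of_degree_lt hd
        rw [this, zero_smul, add_zero, ← he, ev_eq_sum A hd]
        rfl
      have hvec0 : ∀ h : F[X], h.degree < (n + 1 : ℕ) → vec h = 0 → h = 0 := by
        intro h hd hv
        ext j
        rcases Nat.lt_or_ge j (n + 1) with hj | hj
        · exact congrFun hv ⟨j, by omega⟩
        · exact coeff_eq_zero_of_degree_lt (hd.trans_le (by exact_mod_cast hj))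
      obtain ⟨b', hb'⟩ := exists_smul_of_finrank_le_one hker' (hvec g0 hdg0 hAg0)
        (fun h => hg00 (hvec0 _ hdg0 h)) (hvec _ h6 h5)
      have h7 : f - a' • g - b' • g0 = 0 := by
        apply hvec0
        · exact (degree_sub_le _ _).trans_lt (max_lt h6 ((degree_smul_le _ _).trans_lt hdg0))
        · ext j
          have := congrFun hb' j
          simp only [vec, Pi.smul_apply] at this ⊢
          rw [coeff_sub, this, coeff_smul, sub_self]; rfl
      have h8 : a' • ev B g + b' • ev B g0 = 0 := by
        have h9 := congrArg (ev B) h7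
        rw [ev_sub, ev_sub, ev_smul, ev_smul, hf, ev_zero] at h9
        rw [← neg_eq_zero, ← h9]; abel
      have ha0 : a' ≠ 0 := by
        intro h0
        rw [h0, zero_smul, zero_add] at h8
        have hb0 := (smul_eq_zero.mp h8).resolve_right hu0
        apply hf0
        rw [h0, hb0, zero_smul, zero_smul, sub_zero, sub_zero] at h7
        exact h7
      refine ⟨-(b' / a'), ?_⟩
      have h10 : ev B g = a'⁻¹ • (a' • ev B g) := by rw [smul_smul, inv_mul_cancel₀ ha0, one_smul]
      rw [h10, eq_neg_of_add_eq_zero_left h8, smul_neg, smul_smul, neg_smul, div_eq_inv_mul]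
  obtain ⟨s, hs⟩ := hw
  apply hu0
  rw [hg0', ev_shift, hs, mulVec_smul, hBu, smul_comm, sub_self]

end odd
end fieldlemmas

/-! ### Odd primes -/

section oddprime
open Polynomial
variable {n : ℕ}

/-- The integer matrix `P = ℓ Q` obtained from a rational orthogonal matrix `Q` with `A Q = Q B` that
matches the walk vectors of `B` with those of `A`. -/
structure Intertwines (A B P : Matrix (Fin (n + 2)) (Fin (n + 2)) ℤ) (ℓ : ℤ) : Prop where
  transpose_mul_self : Pᵀ * P = (ℓ ^ 2) • (1 : Matrix (Fin (n + 2)) (Fin (n + 2)) ℤ)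
  mul_eq : A * P = P * B
  transpose_mulVec : ∀ k, Pᵀ *ᵥ kry A k = ℓ • kry B k

theorem map_mulVec_kry {ι : Type*} [Fintype ι] [DecidableEq ι] {R S : Type*} [CommRing R]
    [CommRing S] (f : R →+* S) (M A : Matrix ι ι R) (k : ℕ) :
    M.map f *ᵥ kry (A.map f) k = fun i => f ((M *ᵥ kry A k) i) := by
  ext i
  simp [mulVec, dotProduct, kry_map]

theorem kry_map_dot {ι : Type*} [Fintype ι] [DecidableEq ι] {R S : Type*} [CommRing R]
    [CommRing S] (f : R →+* S) (A : Matrix ι ι R) (k : ℕ) (v : ι → R) :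
    kry (A.map f) k ⬝ᵥ (fun i => f (v i)) = f (kry A k ⬝ᵥ v) := by
  simp [dotProduct, kry_map]

/-- An odd prime divisor of `ℓ` divides `P`, provided its square does not divide the bordered walk
determinant and, if it divides that determinant, the walk matrix has a left null vector modulo `p` that
is not an eigenvector of `A` for `λ₁`. -/
theorem odd_prime_reduction {A B P : Matrix (Fin (n + 2)) (Fin (n + 2)) ℤ} {ℓ : ℤ}
    (hA : A.IsAdjMatrix) (hB : B.IsAdjMatrix) (hm : ∀ k, mom A k = mom B k)
    {τ τ' : Fin (n + 2)} (hne : τ ≠ τ') (htw : IsTwinPair A τ τ')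
    (hI : Intertwines A B P ℓ) (p : ℕ) [Fact p.Prime] (hp2 : p ≠ 2) (hpl : (p : ℤ) ∣ ℓ)
    (hsq : ¬ (p : ℤ) ^ 2 ∣ (hat A (alphaVec τ τ')).det)
    (hcond : (p : ℤ) ∣ (hat A (alphaVec τ τ')).det →
      ∃ x : Fin (n + 2) → ZMod p,
        ((walkMatrix A).map ((↑) : ℤ → ZMod p))ᵀ *ᵥ x = 0 ∧
        (A.map ((↑) : ℤ → ZMod p) -
          ((lam1 A τ τ' : ZMod p)) •
            (1 : Matrix (Fin (n + 2)) (Fin (n + 2)) (ZMod p))) *ᵥ x ≠ 0) :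
    P.map (Int.castRingHom (ZMod p)) = 0 := by
  set φ := Int.castRingHom (ZMod p) with hφ
  have hp : p.Prime := Fact.out
  have h2 : (2 : ZMod p) ≠ 0 := by
    have : ((2 : ℕ) : ZMod p) ≠ 0 := by
      rw [Ne, ZMod.natCast_eq_zero_iff]
      intro h
      exact hp2 ((Nat.prime_dvd_prime_iff_eq hp Nat.prime_two).mp h)
    exact_mod_cast this
  have hℓ0 : φ ℓ = 0 := (ZMod.intCast_zmod_eq_zero_iff_dvd ℓ p).mpr hpl
  set Ab := A.map φ with hAb
  set Bb := B.map φ with hBb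
  set Pb := P.map φ with hPb
  set a : Fin (n + 2) → ZMod p := fun i => φ (alphaVec τ τ' i) with ha_def
  have hAs : Ab.IsSymm := map_symm' hA.symm
  have hBs : Bb.IsSymm := map_symm' hB.symm
  have hmb : ∀ k, mom Ab k = mom Bb k := fun k => by rw [hAb, hBb, mom_map, mom_map, hm]
  have ha : ∀ k, kry Ab k ⬝ᵥ a = 0 := fun k => by
    rw [hAb, ha_def, kry_map_dot, kry_dot_alphaVec hne htw, map_zero]
  have haa : a ⬝ᵥ a = 2 := by
    have : a ⬝ᵥ a = φ (alphaVec τ τ' ⬝ᵥ alphaVec τ τ') := by simp [a, dotProduct]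
    rw [this, alphaVec_self hne]; simp [hφ]
  have hAa : Ab *ᵥ a = φ (lam1 A τ τ') • a := by
    have h1 := mulVec_alphaVec hA hne htw
    ext i
    have h3 : (Ab *ᵥ a) i = φ ((A *ᵥ alphaVec τ τ') i) := by
      simp [a, Ab, mulVec, dotProduct]
    rw [h3, h1]
    simp [a]
  have hPk : ∀ k, Pbᵀ *ᵥ kry Ab k = 0 := by
    intro k
    rw [hPb, hAb, ← transpose_map, map_mulVec_kry, hI.transpose_mulVec]
    ext i
    rw [Pi.smul_apply, smul_eq_mul, map_mul, hℓ0, zero_mul]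
    rfl
  have hPP : Pbᵀ * Pb = 0 := by
    rw [hPb, ← transpose_map, ← Matrix.map_mul, hI.transpose_mul_self]
    ext i j
    rw [map_apply, Matrix.smul_apply, smul_eq_mul, map_mul, map_pow, hℓ0]
    simp
  have hAP : Ab * Pb = Pb * Bb := by
    rw [hAb, hPb, hBb, ← Matrix.map_mul, ← Matrix.map_mul, hI.mul_eq]
  have hhat : (hat A (alphaVec τ τ')).map φ = hat Ab a := hat_map φ _ _
  by_cases hpd : (p : ℤ) ∣ (hat A (alphaVec τ τ')).det
  swap
  · refine eq_zero_of_det_ne_zero h2 ha haa ?_ hPk hPP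
    rwa [← hhat, Ne, det_eq_zero_mod]
  have hdet : (hat Ab a).det = 0 := by rwa [← hhat, det_eq_zero_mod]
  have hker' : Module.finrank (ZMod p) (LinearMap.ker (hat Ab a).mulVecLin) ≤ 1 := by
    rw [← hhat]; exact finrank_ker_le _ p 1 hsq
  have hkert : Module.finrank (ZMod p) (LinearMap.ker (hat Ab a)ᵀ.mulVecLin) ≤ 1 := by
    rw [← hhat, ← transpose_map]; exact finrank_ker_le _ p 1 (by rwa [det_transpose])
  obtain ⟨x0, hx0, hx0'⟩ := hcond hpd
  have hx0k : ∀ k < n + 2, kry Ab k ⬝ᵥ x0 = 0 := by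
    intro k hk
    have h3 := congrFun hx0 ⟨k, hk⟩
    rw [Pi.zero_apply] at h3
    rw [← h3]
    have h4 : ∀ i, kry Ab k i = ((walkMatrix A i ⟨k, hk⟩ : ℤ) : ZMod p) := by
      intro i
      rw [hAb, kry_map]; rfl
    simp [mulVec, dotProduct, h4]
  have hx0'' : Ab *ᵥ x0 - φ (lam1 A τ τ') • x0 ≠ 0 := by
    intro h
    apply hx0'
    rw [sub_mulVec, smul_mulVec, one_mulVec]
    exact h
  set x := x0 - ((a ⬝ᵥ x0) / 2) • a with hx
  have hax : a ⬝ᵥ x = 0 := dot_sub_proj h2 haa x0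
  have hxk' : ∀ k < n + 2, kry Ab k ⬝ᵥ x = 0 := by
    intro k hk
    rw [hx, dotProduct_sub, dotProduct_smul, hx0k k hk, ha, smul_zero, sub_zero]
  have hxA : Ab *ᵥ x - φ (lam1 A τ τ') • x ≠ 0 := by
    have : Ab *ᵥ x - φ (lam1 A τ τ') • x = Ab *ᵥ x0 - φ (lam1 A τ τ') • x0 := by
      rw [hx, mulVec_sub, mulVec_smul, hAa, smul_sub, smul_comm]
      abel
    rwa [this]
  have hxne : x ≠ 0 := by
    intro h
    apply hxA
    rw [h, mulVec_zero, smul_zero, sub_zero]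
  have hxker : (hat Ab a)ᵀ *ᵥ x = 0 :=
    hat_transpose_mulVec_eq_zero (fun k hk => hxk' k (by omega)) hax
  have hker : ∀ v, (hat Ab a)ᵀ *ᵥ v = 0 → ∃ t : ZMod p, v = t • x := fun v hv =>
    exists_smul_of_finrank_le_one hkert (LinearMap.mem_ker.mpr hxker) hxne (LinearMap.mem_ker.mpr hv)
  obtain ⟨μ, hAx⟩ : ∃ μ : ZMod p, Ab *ᵥ x = μ • x := by
    apply hker
    apply hat_transpose_mulVec_eq_zero
    · intro k hk
      rw [← mulVec_dotProduct_symm hAs, ← kry_succ]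
      exact hxk' _ (by omega)
    · rw [← mulVec_dotProduct_symm hAs, hAa, smul_dotProduct, hax, smul_zero]
  have hμ : μ ≠ φ (lam1 A τ τ') := by
    rintro rfl
    exact hxA (by rw [hAx, sub_self])
  have hxk : ∀ k, kry Ab k ⬝ᵥ x = 0 := by
    intro k
    induction k with
    | zero => exact hxk' 0 (by omega)
    | succ k ih => rw [kry_succ, mulVec_dotProduct_symm hAs, hAx, dotProduct_smul, ih, smul_zero]
  by_contra hPne
  obtain ⟨y, hy0, hxx, hBy, hPxy⟩ := rank_one_structure h2 hBs ha haa hAa hxne hax hAx hμ hker hPk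
    hPP hAP hPne
  obtain ⟨g, hgd, hgx⟩ := exists_ev_of_mem_krySpan Ab
    (mem_krySpan_of_isotropic h2 ha haa hax hxx hker hdet)
  have hg0 : g ≠ 0 := by
    rintro rfl
    exact hxne (by rw [← hgx, ev_zero])
  set g0 := (X - C μ) * g with hg0'
  have hg00 : g0 ≠ 0 := mul_ne_zero (X_sub_C_ne_zero μ) hg0
  have hdg0 : g0.degree < (n + 1 : ℕ) := by
    rw [hg0', degree_mul, degree_X_sub_C, add_comm, degree_eq_natDegree hg0]
    have := (natDegree_lt_iff_degree_lt hg0).mpr hgd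
    exact_mod_cast Nat.succ_lt_succ this
  have hAg0 : ev Ab g0 = 0 := by rw [hg0', ev_shift, hgx, hAx, sub_self]
  -- An integral lift of the coefficient vector of `g0`, regarded as a relation among the columns.
  let f : Fin (n + 2) → ℤ := fun j => ((g0.coeff j).val : ℤ)
  have hfφ : ∀ j, φ (f j) = g0.coeff j := by intro j; simp [f, hφ]
  have hsum : ∀ M : Matrix (Fin (n + 2)) (Fin (n + 2)) ℤ, ∀ i,
      φ ((∑ j : Fin (n + 1), f j.castSucc • kry M j) i) = ev (M.map φ) g0 i := by
    intro M i
    rw [ev_eq_sum _ hdg0]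
    simp only [Finset.sum_apply, map_sum, Pi.smul_apply, smul_eq_mul, map_mul, hfφ, kry_map]
    rfl
  have hflast : f (Fin.last _) = 0 := by
    simp only [f, Fin.val_last, coeff_eq_zero_of_degree_lt hdg0, ZMod.val_zero, Nat.cast_zero]
  have hex : ∀ i, ∃ v : ℤ, (∑ j : Fin (n + 1), f j.castSucc • kry A j) i = p * v := by
    intro i
    have := hsum A i
    rw [← hAb, hAg0] at this
    exact (ZMod.intCast_zmod_eq_zero_iff_dvd _ p).mp this
  choose v hv using hex
  have hv' : (∑ j : Fin (n + 1), f j.castSucc • kry A j) = (p : ℤ) • v := by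
    ext i; rw [hv]; rfl
  obtain ⟨j, hj⟩ : ∃ j, ((f j : ℤ) : ZMod p) ≠ 0 := by
    by_contra hc
    push Not at hc
    apply hg00
    ext j
    rcases Nat.lt_or_ge j (n + 1) with hj | hj
    · have h3 := hc ⟨j, by omega⟩
      have h4 := hfφ ⟨j, by omega⟩
      rw [coeff_zero, ← h4]; exact h3
    · exact coeff_eq_zero_of_degree_lt (hdg0.trans_le (by exact_mod_cast hj))
  have hxv : (fun i => (v i : ZMod p)) ⬝ᵥ x ≠ 0 := by
    intro h0
    apply hsq
    refine sq_dvd_det _ p f v x hxne ?_ ?_ h0 j hj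
    · rw [← hφ, hhat]; exact hxker
    · rw [hat_mulVec, hflast, zero_smul, add_zero, hv']
  obtain ⟨ℓ', hℓ'⟩ := hpl
  have hPv : Pᵀ *ᵥ v = ℓ' • ∑ j : Fin (n + 1), f j.castSucc • kry B j := by
    have h3 : (p : ℤ) • (Pᵀ *ᵥ v) =
        (p : ℤ) • (ℓ' • ∑ j : Fin (n + 1), f j.castSucc • kry B j) := by
      rw [smul_smul, ← hℓ', ← mulVec_smul, ← hv', mulVec_sum, Finset.smul_sum]
      refine Finset.sum_congr rfl fun j _ => ?_
      rw [mulVec_smul, hI.transpose_mulVec, smul_comm]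
    exact smul_right_injective _ (by exact_mod_cast hp.ne_zero : (p : ℤ) ≠ 0) h3
  have hyu : ∀ i, y i * ((fun i => (v i : ZMod p)) ⬝ᵥ x) = φ ℓ' * ev Bb g0 i := by
    intro i
    have h3 := congrArg φ (congrFun hPv i)
    rw [Pi.smul_apply, smul_eq_mul, map_mul, hsum B i] at h3
    rw [← hBb] at h3
    rw [← h3]
    have h5 : ∀ l, φ (P l i) = x l * y i := fun l => hPxy l i
    simp only [mulVec, dotProduct, transpose_apply, map_sum, map_mul, h5, Finset.mul_sum]
    refine Finset.sum_congr rfl fun l _ => ?_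
    simp only [hφ, eq_intCast]
    ring
  set c := (fun i => (v i : ZMod p)) ⬝ᵥ x
  have hyu' : c • y = φ ℓ' • ev Bb g0 := by
    ext i; rw [Pi.smul_apply, Pi.smul_apply, smul_eq_mul, smul_eq_mul, mul_comm, hyu]
  have hcy : c • y ≠ 0 := smul_ne_zero hxv hy0
  have hℓne : φ ℓ' ≠ 0 := by
    intro h; rw [h, zero_smul] at hyu'; exact hcy hyu'
  have hu0 : ev Bb g0 ≠ 0 := by
    intro h; rw [h, smul_zero] at hyu'; exact hcy hyu'
  have hBu : Bb *ᵥ ev Bb g0 = μ • ev Bb g0 := by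
    have h3 : φ ℓ' • (Bb *ᵥ ev Bb g0) = φ ℓ' • (μ • ev Bb g0) := by
      rw [← mulVec_smul, smul_comm, ← hyu', mulVec_smul, hBy, smul_comm]
    exact smul_right_injective _ hℓne h3
  exact no_nonzero_eigenvector hAs hBs hmb ha hxk hAx hker hker' hgd hg0 hgx hu0 hBu

end oddprime

/-! ### The prime two -/

section two

/-- An integral symmetric form with zero diagonal is even. -/
theorem even_quadForm {ι : Type*} [Fintype ι] (M : Matrix ι ι ℤ) (hM : M.IsSymm)
    (hd : ∀ i, M i i = 0) (v : ι → ℤ) : (2 : ℤ) ∣ v ⬝ᵥ (M *ᵥ v) := by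
  classical
  have h : ((v ⬝ᵥ (M *ᵥ v) : ℤ) : ZMod 2) = 0 := by
    have h1 : ((v ⬝ᵥ (M *ᵥ v) : ℤ) : ZMod 2) =
        ∑ x : ι × ι, ((v x.1 * (M x.1 x.2 * v x.2) : ℤ) : ZMod 2) := by
      simp [dotProduct, mulVec, Fintype.sum_prod_type, Finset.mul_sum]
    rw [h1]
    refine Finset.sum_involution (fun x _ => (x.2, x.1)) ?_ ?_ ?_ ?_
    · rintro ⟨i, j⟩ _
      have : v j * (M j i * v i) = v i * (M i j * v j) := by rw [hM.apply i j]; ring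
      simp only
      rw [this]
      exact CharTwo.add_self_eq_zero _
    · rintro ⟨i, j⟩ _ hne heq
      simp only [Prod.mk.injEq] at heq
      obtain ⟨rfl, _⟩ := heq
      simp [hd] at hne
    · intro _ _; exact Finset.mem_univ _
    · intro _ _; rfl
  exact (ZMod.intCast_zmod_eq_zero_iff_dvd _ 2).mp h

variable {n : ℕ}

/-- The number of walks of positive length is even: split off the middle of the walk. -/
theorem even_mom {A : Matrix (Fin (n + 2)) (Fin (n + 2)) ℤ} (hA : A.IsAdjMatrix) (k : ℕ) (hk : 0 < k) :
    (2 : ℤ) ∣ mom A k := by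
  induction k using Nat.strong_induction_on with
  | _ k ih =>
    rcases Nat.even_or_odd' k with ⟨j, rfl | rfl⟩
    · have h1 : mom A (2 * j) = kry A j ⬝ᵥ kry A j := by
        rw [kry_dotProduct_kry hA.symm, two_mul]
      have h2 : (2 : ℤ) ∣ kry A j ⬝ᵥ kry A j - mom A j := by
        simp only [mom, dotProduct, ← Finset.sum_sub_distrib]
        refine Finset.dvd_sum fun i _ => ?_
        rw [Pi.one_apply, ← sub_mul]
        exact even_iff_two_dvd.mp (by
          have := Int.even_mul_pred_self (kry A j i)
          rwa [mul_comm] at this)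
      rw [h1]
      have h3 := ih j (by omega) (by omega)
      have := dvd_add h2 h3
      rwa [sub_add_cancel] at this
    · have h1 : mom A (2 * j + 1) = kry A j ⬝ᵥ (A *ᵥ kry A j) := by
        rw [← kry_succ, kry_dotProduct_kry hA.symm]; congr 1; omega
      rw [h1]
      exact even_quadForm A hA.symm hA.apply_diag _

theorem mom_zero (A : Matrix (Fin (n + 2)) (Fin (n + 2)) ℤ) : mom A 0 = n + 2 := by
  simp [mom, kry_zero, dotProduct]

/-- A matrix of odd determinant is injective modulo `2`. -/
theorem even_of_mulVec_even {ι : Type*} [Fintype ι] [DecidableEq ι] (M : Matrix ι ι ℤ) (v : ι → ℤ)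
    (hM : ¬ (2 : ℤ) ∣ M.det) (h : ∀ i, (2 : ℤ) ∣ (M *ᵥ v) i) (j : ι) : (2 : ℤ) ∣ v j := by
  have h1 : M.det * v j = (M.adjugate *ᵥ (M *ᵥ v)) j := by
    rw [mulVec_mulVec, adjugate_mul, smul_mulVec, one_mulVec]; simp
  have h2 : (2 : ℤ) ∣ M.det * v j := by
    rw [h1]
    exact Finset.dvd_sum fun i _ => Dvd.dvd.mul_left (h i) _
  exact (Int.prime_two.dvd_or_dvd h2).resolve_left hM

theorem odd_sq_not_dvd {b : ℤ} (hb : Odd b) : ¬ (2 : ℤ) ∣ b ^ 2 := by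
  rw [← even_iff_two_dvd, Int.not_even_iff_odd]
  exact hb.pow

/-- For an even number of vertices, the halved Gram matrix has odd determinant `b ^ 2`, so a relation
modulo `4` between its even-indexed columns is trivial modulo `2`. -/
theorem coeff_even_of_even (A : Matrix (Fin (n + 2)) (Fin (n + 2)) ℤ) (m : ℕ) (hn : n = 2 * m)
    (hmom : ∀ k, (2 : ℤ) ∣ mom A k) {b : ℤ} (hb : Odd b)
    (hg : 2 * (gram A).det = 2 ^ (n + 2) * b ^ 2) (f : Fin (m + 1) → ℤ)
    (hf : ∀ k, (4 : ℤ) ∣ ∑ i, f i * mom A (2 * i + k)) (i : Fin (m + 1)) : (2 : ℤ) ∣ f i := by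
  choose h hh using hmom
  let M : Matrix (Fin (n + 1)) (Fin (n + 1)) ℤ := Matrix.of fun r j => h (r + j)
  have hM : gram A = (2 : ℤ) • M := by ext r j; simp [gram, M, hh]
  have hdet : M.det = b ^ 2 := by
    rw [hM, det_smul, Fintype.card_fin] at hg
    have h0 : (2 : ℤ) ^ (n + 2) ≠ 0 := by positivity
    apply mul_left_cancel₀ h0
    rw [← hg]; ring
  let e : Fin (m + 1) → Fin (n + 1) := fun i => ⟨2 * i, by omega⟩
  have he : Function.Injective e := fun i j hij => by
    simp only [e, Fin.mk.injEq] at hij; omega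
  let v : Fin (n + 1) → ℤ := ∑ i, f i • Pi.single (e i) 1
  have hv : v (e i) = f i := by
    simp [v, Finset.sum_apply, Pi.single_apply, he.eq_iff]
  rw [← hv]
  refine even_of_mulVec_even M v (by rw [hdet]; exact odd_sq_not_dvd hb) (fun r => ?_) _
  have h1 : (M *ᵥ v) r = ∑ i, f i * h (2 * i + r) := by
    simp only [v, mulVec_sum, mulVec_smul, mulVec_single_one, Finset.sum_apply, Pi.smul_apply,
      smul_eq_mul]
    refine Finset.sum_congr rfl fun i _ => ?_
    simp [M, e, add_comm]
  have h2 := hf r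
  have h3 : ∑ i, f i * mom A (2 * i + r) = 2 * (M *ᵥ v) r := by
    rw [h1, Finset.mul_sum]
    refine Finset.sum_congr rfl fun i _ => ?_
    rw [hh]; ring
  rw [h3] at h2
  omega

/-- For an odd number of vertices, the Gram matrix with all but its first column halved has odd
determinant `b ^ 2`. The relations modulo `4` concern its odd-indexed columns; the coefficient `t` of the
first column is chosen so that the row `r = 0`, which is not covered by them, vanishes modulo `2`. -/
theorem coeff_even_of_odd (A : Matrix (Fin (n + 2)) (Fin (n + 2)) ℤ) (m : ℕ) (hn : n = 2 * m + 1)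
    (hmom : ∀ k, (2 : ℤ) ∣ mom A (k + 1)) {b : ℤ} (hb : Odd b)
    (hg : 2 * (gram A).det = 2 ^ (n + 1) * b ^ 2) (f : Fin (m + 1) → ℤ)
    (hf : ∀ k, (4 : ℤ) ∣ ∑ i, f i * mom A (2 * i + k + 2)) (i : Fin (m + 1)) : (2 : ℤ) ∣ f i := by
  choose h hh using hmom
  let M : Matrix (Fin (n + 1)) (Fin (n + 1)) ℤ :=
    Matrix.of fun r j => if (j : ℕ) = 0 then mom A r else h (r + j - 1)
  let D : Matrix (Fin (n + 1)) (Fin (n + 1)) ℤ := Matrix.diagonal fun j => if j = 0 then 2 else 1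
  have hM : gram A * D = (2 : ℤ) • M := by
    ext r j
    rw [Matrix.mul_diagonal]
    by_cases hj : j = 0
    · subst hj; simp [gram, M, mul_comm]
    · have hj' : (j : ℕ) ≠ 0 := fun h => hj (Fin.ext h)
      have : (r : ℕ) + j = (r + j - 1) + 1 := by omega
      simp only [gram, M, hj, hj', if_false, mul_one, Matrix.of_apply, Matrix.smul_apply, smul_eq_mul]
      rw [this, hh]
      rfl
  have hD : D.det = 2 := by
    rw [det_diagonal]; simp
  have hdet : M.det = b ^ 2 := by
    have h1 := congrArg det hM
    rw [det_smul, Fintype.card_fin, det_mul, hD, mul_comm, hg] at h1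
    have h0 : (2 : ℤ) ^ (n + 1) ≠ 0 := by positivity
    exact (mul_left_cancel₀ h0 h1).symm
  let e : Fin (m + 1) → Fin (n + 1) := fun i => ⟨2 * i + 1, by omega⟩
  have he : Function.Injective e := fun i j hij => by
    simp only [e, Fin.mk.injEq] at hij; omega
  have he0 : ∀ i, (0 : Fin (n + 1)) ≠ e i := fun i hi => by
    have := congrArg Fin.val hi
    simp [e] at this
  let t : ℤ := ∑ i : Fin (m + 1), f i * h (2 * i)
  let v : Fin (n + 1) → ℤ := t • Pi.single 0 1 + ∑ i, f i • Pi.single (e i) 1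
  have hv : v (e i) = f i := by
    simp [v, Finset.sum_apply, Pi.single_apply, he.eq_iff, (he0 i).symm]
  rw [← hv]
  refine even_of_mulVec_even M v (by rw [hdet]; exact odd_sq_not_dvd hb) (fun r => ?_) _
  have h1 : (M *ᵥ v) r = t * mom A r + ∑ i : Fin (m + 1), f i * h (2 * i + r) := by
    simp only [v, mulVec_add, mulVec_sum, mulVec_smul, mulVec_single_one, Finset.sum_apply,
      Pi.smul_apply, smul_eq_mul, Pi.add_apply]
    congr 1
    refine Finset.sum_congr rfl fun i _ => ?_
    have : (r : ℕ) + (2 * i + 1) - 1 = 2 * i + r := by omega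
    simp [M, e, this]
  rw [h1]
  rcases Nat.eq_zero_or_pos (r : ℕ) with hr | hr
  · rw [hr, mom_zero]
    simp only [add_zero]
    change (2 : ℤ) ∣ t * (n + 2) + t
    rw [hn]
    push_cast
    exact ⟨t * (m + 2), by ring⟩
  · obtain ⟨k, hk⟩ : ∃ k, (r : ℕ) = k + 1 := ⟨r - 1, by omega⟩
    have h2 := hf k
    have h3 : ∑ i : Fin (m + 1), f i * mom A (2 * i + k + 2) =
        2 * ∑ i : Fin (m + 1), f i * h (2 * i + r) := by
      rw [Finset.mul_sum]
      refine Finset.sum_congr rfl fun i _ => ?_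
      rw [show 2 * (i : ℕ) + k + 2 = (2 * i + k + 1) + 1 from rfl, hh, hk]; ring_nf
    rw [h3] at h2
    refine dvd_add (Dvd.dvd.mul_left ?_ _) (by omega)
    rw [hk, hh]
    exact dvd_mul_right _ _

/-- Modulo `2`, each column of `P` is a combination of the Krylov vectors `A^{i+δ} e`, `i ≤ m`: these
span a totally isotropic space, which by dimension count is the whole orthogonal complement of the
Krylov space. -/
theorem column_mod_two {A B P : Matrix (Fin (n + 2)) (Fin (n + 2)) ℤ} {ℓ : ℤ}
    (hA : A.IsAdjMatrix) (hI : Intertwines A B P ℓ) (hℓ : (2 : ℤ) ∣ ℓ) (m δ : ℕ)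
    (hn : n = 2 * m + δ) (τ : Fin (n + 2))
    (hc : ¬ (2 : ℤ) ^ (m + 1) ∣ cofactorLast A τ) (j : Fin (n + 2)) :
    ∃ f : Fin (m + 1) → ℤ, (∀ i, f i = 0 ∨ f i = 1) ∧
      ∀ l, (2 : ℤ) ∣ P l j - (∑ i, f i • kry A (i + δ)) l := by
  have : Fact (Nat.Prime 2) := ⟨Nat.prime_two⟩
  set φ := Int.castRingHom (ZMod 2) with hφ
  set Ab := A.map φ with hAb
  have hAs : Ab.IsSymm := map_symm' hA.symm
  have hdet : (hat A (Pi.single τ 1)).det = cofactorLast A τ := by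
    rw [det_hat]
    simp [Pi.single_apply]
  have h1 := le_finrank_krySpan A (Pi.single τ 1) 2 m (by rw [hdet]; exact_mod_cast hc)
  rw [← hφ, ← hAb] at h1
  have h2 := finrank_krySpan_add_kryPerp Ab (n + 1)
  rw [Fintype.card_fin] at h2
  have hli' : LinearIndependent (ZMod 2) (fun i : Fin (m + δ + 1) => kry Ab i) := by
    by_contra hli
    have h3 : krySpan Ab (n + 1) ≤ krySpan Ab (m + δ) := by
      rw [krySpan, Submodule.span_le]
      rintro _ ⟨k, _, rfl⟩
      exact kry_mem_of_dependent Ab _ hli k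
    have h4 := Submodule.finrank_mono h3
    have h5 := finrank_krySpan_le Ab (m + δ)
    omega
  have hli : LinearIndependent (ZMod 2) (fun i : Fin (m + 1) => kry Ab (i + δ)) :=
    hli'.comp (fun i : Fin (m + 1) => (⟨i + δ, by omega⟩ : Fin (m + δ + 1)))
      (fun i j hij => by simp only [Fin.mk.injEq] at hij; omega)
  have hmomz : ∀ k, mom Ab (k + δ) = 0 := by
    intro k
    rw [hAb, mom_map]
    refine (ZMod.intCast_zmod_eq_zero_iff_dvd _ 2).mpr ?_
    rcases Nat.eq_zero_or_pos (k + δ) with h0 | h0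
    · rw [h0, mom_zero]
      have : δ = 0 := by omega
      rw [hn, this]
      exact ⟨m + 1, by push_cast; ring⟩
    · exact even_mom hA _ h0
  have hle : Submodule.span (ZMod 2) (Set.range fun i : Fin (m + 1) => kry Ab (i + δ)) ≤
      kryPerp Ab (n + 1) := by
    rw [Submodule.span_le]
    rintro _ ⟨i, rfl⟩ k _
    rw [kry_dotProduct_kry hAs, ← add_assoc, hmomz]
  have hspan := Submodule.eq_of_le_of_finrank_le hle (by
    rw [finrank_span_eq_card hli, Fintype.card_fin]; omega)
  have hq : (fun i => φ (P i j)) ∈ kryPerp Ab (n + 1) := by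
    intro k _
    have h3 : kry Ab k ⬝ᵥ (fun i => φ (P i j)) = φ ((Pᵀ *ᵥ kry A k) j) := by
      rw [hAb, kry_map_dot φ A k (fun i => P i j), dotProduct_comm]; rfl
    rw [h3, hI.transpose_mulVec, Pi.smul_apply, smul_eq_mul, map_mul]
    have : φ ℓ = 0 := (ZMod.intCast_zmod_eq_zero_iff_dvd _ 2).mpr hℓ
    rw [this, zero_mul]
  rw [← hspan, Submodule.mem_span_range_iff_exists_fun] at hq
  obtain ⟨c, hcq⟩ := hq
  refine ⟨fun i => ((c i).val : ℤ), fun i => ?_, fun l => ?_⟩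
  · change ((c i).val : ℤ) = 0 ∨ ((c i).val : ℤ) = 1
    have := ZMod.val_lt (c i)
    omega
  · refine (ZMod.intCast_zmod_eq_zero_iff_dvd _ 2).mp ?_
    have h3 := congrFun hcq l
    simp only [Finset.sum_apply, Pi.smul_apply, smul_eq_mul, hAb, kry_map] at h3 ⊢
    push_cast
    rw [sub_eq_zero]
    refine h3.symm.trans ?_
    refine Finset.sum_congr rfl fun i _ => ?_
    simp [hφ]

/-- The congruence `qᵀ A^k q ≡ 0` modulo `4` for a column `q` of `P`, expressed in the `0`-`1`
coefficients `f` of `q` modulo `2`. -/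
theorem four_dvd_sum {A B P : Matrix (Fin (n + 2)) (Fin (n + 2)) ℤ} {ℓ : ℤ}
    (hA : A.IsAdjMatrix) (hI : Intertwines A B P ℓ) (hℓ : (2 : ℤ) ∣ ℓ) (m δ : ℕ)
    (j : Fin (n + 2)) (f : Fin (m + 1) → ℤ) (hf : ∀ i, f i = 0 ∨ f i = 1)
    (hP : ∀ l, (2 : ℤ) ∣ P l j - (∑ i, f i • kry A (i + δ)) l) (k : ℕ) :
    (4 : ℤ) ∣ ∑ i : Fin (m + 1), f i * mom A (2 * i + k + 2 * δ) := by
  have hpow : A ^ k * P = P * B ^ k := by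
    induction k with
    | zero => simp
    | succ k ih => rw [pow_succ, mul_assoc, hI.mul_eq, ← mul_assoc, ih, mul_assoc, ← pow_succ]
  set q : Fin (n + 2) → ℤ := fun i => P i j with hq
  have h1 : q ⬝ᵥ (A ^ k *ᵥ q) = ℓ ^ 2 * (B ^ k) j j := by
    have h2 : q ⬝ᵥ (A ^ k *ᵥ q) = (Pᵀ * (A ^ k * P)) j j := by
      simp only [q, Matrix.mul_apply, mulVec, dotProduct, transpose_apply]
    rw [h2, hpow, ← mul_assoc, hI.transpose_mul_self, smul_mul_assoc, one_mul]
    rfl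
  have h4 : (4 : ℤ) ∣ q ⬝ᵥ (A ^ k *ᵥ q) := by
    rw [h1]
    refine Dvd.dvd.mul_right ?_ _
    have := pow_dvd_pow_of_dvd hℓ 2
    norm_num at this
    exact this
  set u : Fin (n + 2) → ℤ := ∑ i, f i • kry A (i + δ) with hu
  choose w hw using hP
  have hqu : q = u + (2 : ℤ) • w := by
    ext l
    have := hw l
    simp only [Pi.add_apply, Pi.smul_apply, smul_eq_mul, ← this, hq]
    ring
  have hAk : (A ^ k).IsSymm := isSymm_pow hA.symm k
  have h5 : q ⬝ᵥ (A ^ k *ᵥ q) = u ⬝ᵥ (A ^ k *ᵥ u) +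
      4 * (u ⬝ᵥ (A ^ k *ᵥ w) + w ⬝ᵥ (A ^ k *ᵥ w)) := by
    have h6 : w ⬝ᵥ (A ^ k *ᵥ u) = u ⬝ᵥ (A ^ k *ᵥ w) := by
      rw [← mulVec_dotProduct_symm hAk, dotProduct_comm]
    rw [hqu, mulVec_add, mulVec_smul]
    simp only [add_dotProduct, dotProduct_add, smul_dotProduct, dotProduct_smul, smul_eq_mul, h6]
    ring
  have h7 : (4 : ℤ) ∣ u ⬝ᵥ (A ^ k *ᵥ u) := by
    rw [h5] at h4
    omega
  have hev : ∀ r, ∃ h : ℤ, 0 < r → mom A r = 2 * h := by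
    intro r
    rcases Nat.eq_zero_or_pos r with h0 | h0
    · exact ⟨0, fun h => by omega⟩
    · obtain ⟨h, hh⟩ := even_mom hA r h0
      exact ⟨h, fun _ => hh⟩
  choose h hh using hev
  -- The off-diagonal terms come in equal pairs, and each is even: they contribute `0` modulo `4`.
  let H : Matrix (Fin (m + 1)) (Fin (m + 1)) ℤ :=
    Matrix.of fun i i' => if i = i' then 0 else h (i + i' + k + 2 * δ)
  have hH : (2 : ℤ) ∣ f ⬝ᵥ (H *ᵥ f) := by
    apply even_quadForm
    · ext i i'
      simp [H, eq_comm, add_comm]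
    · intro i; simp [H]
  have h8 : u ⬝ᵥ (A ^ k *ᵥ u) = ∑ i : Fin (m + 1), f i * mom A (2 * i + k + 2 * δ) +
      2 * (f ⬝ᵥ (H *ᵥ f)) := by
    have h9 : u ⬝ᵥ (A ^ k *ᵥ u) =
        ∑ i : Fin (m + 1), ∑ i' : Fin (m + 1), f i * f i' * mom A (i + i' + k + 2 * δ) := by
      rw [hu, mulVec_sum, sum_dotProduct]
      refine Finset.sum_congr rfl fun i _ => ?_
      rw [dotProduct_sum]
      refine Finset.sum_congr rfl fun i' _ => ?_
      rw [mulVec_smul, pow_mulVec_kry, smul_dotProduct, dotProduct_smul,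
        kry_dotProduct_kry hA.symm, smul_eq_mul, smul_eq_mul, ← mul_assoc]
      congr 2
      omega
    rw [h9]
    simp only [dotProduct, mulVec, Finset.mul_sum, ← Finset.sum_add_distrib]
    refine Finset.sum_congr rfl fun i _ => ?_
    have h10 : f i * mom A (2 * i + k + 2 * δ) =
        ∑ i' : Fin (m + 1), if i = i' then f i * mom A (2 * i + k + 2 * δ) else 0 := by simp
    rw [h10, ← Finset.sum_add_distrib]
    refine Finset.sum_congr rfl fun i' _ => ?_
    by_cases hii : i = i'
    · subst hii
      have : f i * f i = f i := by rcases hf i with h0 | h0 <;> rw [h0] <;> norm_num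
      simp [H, this, two_mul]
    · have hne : (i : ℕ) ≠ i' := fun h => hii (Fin.ext h)
      have := hh (i + i' + k + 2 * δ) (by omega)
      simp only [H, hii, if_false, Matrix.of_apply, zero_add]
      rw [this]; ring
  rw [h8] at h7
  omega

/-- If `ℓ` is even, so is `P`. -/
theorem two_reduction {A B P : Matrix (Fin (n + 2)) (Fin (n + 2)) ℤ} {ℓ : ℤ}
    (hA : A.IsAdjMatrix) (hI : Intertwines A B P ℓ) (hℓ : (2 : ℤ) ∣ ℓ)
    {τ τ' : Fin (n + 2)} (hne : τ ≠ τ') (htw : IsTwinPair A τ τ') {b : ℤ} (hb : Odd b)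
    (hcof : cofactorLast A τ = 2 ^ (n / 2) * b ∨ cofactorLast A τ = -(2 ^ (n / 2) * b)) :
    ∀ i j, (2 : ℤ) ∣ P i j := by
  have hndvd : ¬ (2 : ℤ) ^ (n / 2 + 1) ∣ cofactorLast A τ := by
    have h1 : ¬ (2 : ℤ) ^ (n / 2 + 1) ∣ 2 ^ (n / 2) * b := by
      rw [pow_succ]
      intro h
      have h2 := (mul_dvd_mul_iff_left (by positivity : (2 : ℤ) ^ (n / 2) ≠ 0)).mp h
      rw [← even_iff_two_dvd] at h2
      exact (Int.not_even_iff_odd.mpr hb) h2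
    rcases hcof with h | h <;> rw [h]
    · exact h1
    · rwa [dvd_neg]
  have hsq : (cofactorLast A τ) ^ 2 = 2 ^ (2 * (n / 2)) * b ^ 2 := by
    rcases hcof with h | h <;> rw [h] <;> ring
  have hg : 2 * (gram A).det = 2 ^ (2 * (n / 2) + 2) * b ^ 2 := by
    have h1 := det_hat_sq hA.symm (v := alphaVec τ τ') (fun k _ => kry_dot_alphaVec hne htw k)
    rw [det_hat_alphaVec hne htw, alphaVec_self hne, mul_pow, hsq] at h1
    rw [mul_comm, ← h1]; ring
  intro l j
  rcases Nat.mod_two_eq_zero_or_one n with h0 | h0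
  · have hn : n = 2 * (n / 2) + 0 := by omega
    obtain ⟨f, hf, hP⟩ := column_mod_two hA hI hℓ (n / 2) 0 hn τ hndvd j
    have h4 := four_dvd_sum hA hI hℓ (n / 2) 0 j f hf hP
    have hall : ∀ k, (2 : ℤ) ∣ mom A k := by
      intro k
      rcases Nat.eq_zero_or_pos k with hk | hk
      · rw [hk, mom_zero]; omega
      · exact even_mom hA k hk
    have hf2 := coeff_even_of_even A (n / 2) (by omega) hall hb
      (by rw [hg]; congr 2; omega) f (by simpa using h4)
    have h5 : (2 : ℤ) ∣ (∑ i : Fin (n / 2 + 1), f i • kry A (i + 0)) l := by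
      rw [Finset.sum_apply]
      exact Finset.dvd_sum fun i _ => Dvd.dvd.mul_right (hf2 i) _
    have := dvd_add (hP l) h5
    rwa [sub_add_cancel] at this
  · have hn : n = 2 * (n / 2) + 1 := by omega
    obtain ⟨f, hf, hP⟩ := column_mod_two hA hI hℓ (n / 2) 1 hn τ hndvd j
    have h4 := four_dvd_sum hA hI hℓ (n / 2) 1 j f hf hP
    have hf2 := coeff_even_of_odd A (n / 2) hn (fun k => even_mom hA (k + 1) (by omega)) hb
      (by rw [hg]; congr 2; omega) f (by simpa using h4)
    have h5 : (2 : ℤ) ∣ (∑ i : Fin (n / 2 + 1), f i • kry A (i + 1)) l := by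
      rw [Finset.sum_apply]
      exact Finset.dvd_sum fun i _ => Dvd.dvd.mul_right (hf2 i) _
    have := dvd_add (hP l) h5
    rwa [sub_add_cancel] at this

end two

/-! ### The level of the orthogonal matrix -/

section final
variable {n : ℕ}

/-- An integer vector whose entries have sum `1` and sum of squares `1` is a standard basis
vector: the entries `x` satisfy `x ≤ x ^ 2` termwise, hence `x = x ^ 2`. -/
theorem exists_eq_single {ι : Type*} [Fintype ι] [DecidableEq ι] (v : ι → ℤ)
    (h1 : ∑ i, v i = 1) (h2 : ∑ i, v i * v i = 1) : ∃ i, v = Pi.single i 1 := by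
  have h3 : ∀ i ∈ Finset.univ, 0 ≤ v i * v i - v i := by
    intro i _
    rcases le_or_gt (v i) 0 with h | h
    · nlinarith
    · nlinarith
  have h4 : ∑ i, (v i * v i - v i) = 0 := by
    rw [Finset.sum_sub_distrib, h1, h2, sub_self]
  rw [Finset.sum_eq_zero_iff_of_nonneg h3] at h4
  have h5 : ∀ i, v i = 0 ∨ v i = 1 := by
    intro i
    have h := h4 i (Finset.mem_univ i)
    have : v i * (v i - 1) = 0 := by linarith
    rcases mul_eq_zero.mp this with h | h
    · exact Or.inl h
    · exact Or.inr (by linarith)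
  obtain ⟨i, hi⟩ : ∃ i, v i = 1 := by
    by_contra hcon
    push Not at hcon
    have : ∑ i, v i = 0 := Finset.sum_eq_zero fun i _ => (h5 i).resolve_right (hcon i)
    omega
  refine ⟨i, funext fun j => ?_⟩
  rcases eq_or_ne j i with rfl | hji
  · simp [hi]
  · rw [Pi.single_eq_of_ne hji]
    have h6 : ∑ k ∈ Finset.univ.erase i, v k = 0 := by
      have := Finset.add_sum_erase Finset.univ v (Finset.mem_univ i)
      omega
    rw [Finset.sum_eq_zero_iff_of_nonneg (fun k _ => by rcases h5 k with h | h <;> omega)] at h6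
    exact h6 j (by simp [hji])

/-- At level one the intertwiner is a permutation matrix, so the graphs are isomorphic. -/
theorem exists_perm_of_intertwines {A B P : Matrix (Fin (n + 2)) (Fin (n + 2)) ℤ}
    (hI : Intertwines A B P 1) :
    ∃ σ : Equiv.Perm (Fin (n + 2)), ∀ i j, B i j = A (σ i) (σ j) := by
  have hPP : Pᵀ * P = 1 := by simpa using hI.transpose_mul_self
  have hcol : ∀ j, ∃ i, (fun k => P k j) = Pi.single i 1 := by
    intro j
    refine exists_eq_single _ ?_ ?_
    · have h := congrFun (hI.transpose_mulVec 0) j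
      simpa [kry_zero, mulVec, dotProduct] using h
    · have h := congrFun (congrFun hPP j) j
      simpa [Matrix.mul_apply] using h
  choose σ hσ using hcol
  have hP : ∀ k j, P k j = if k = σ j then 1 else 0 := by
    intro k j
    have := congrFun (hσ j) k
    simpa [Pi.single_apply] using this
  have hinj : Function.Injective σ := by
    intro i j hij
    by_contra hne
    have h := congrFun (congrFun hPP i) j
    rw [Matrix.mul_apply, Matrix.one_apply_ne hne] at h
    simp [hP, hij] at h
  refine ⟨Equiv.ofBijective σ hinj.bijective_of_finite, fun i j => ?_⟩
  have h := congrFun (congrFun hI.mul_eq (σ i)) j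
  rw [Matrix.mul_apply, Matrix.mul_apply] at h
  simp only [hP, hinj.eq_iff] at h
  simpa using h.symm

/-- If, at every level, each prime divisor of `ℓ` divides the whole intertwiner, then the rational
orthogonal matrix `Q` is integral: take `ℓ` least with `ℓ Q` integral. -/
theorem exists_intertwines_one {A B : Matrix (Fin (n + 2)) (Fin (n + 2)) ℤ}
    {Q : Matrix (Fin (n + 2)) (Fin (n + 2)) ℚ} (hQ : Qᵀ * Q = 1)
    (hAQ : A.map (Int.castRingHom ℚ) * Q = Q * B.map (Int.castRingHom ℚ))
    (hk : ∀ k, Q *ᵥ kry (B.map (Int.castRingHom ℚ)) k = kry (A.map (Int.castRingHom ℚ)) k)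
    (hred : ∀ (P : Matrix (Fin (n + 2)) (Fin (n + 2)) ℤ) (ℓ : ℤ), Intertwines A B P ℓ →
      ∀ p : ℕ, p.Prime → (p : ℤ) ∣ ℓ → ∀ i j, (p : ℤ) ∣ P i j) :
    ∃ P, Intertwines A B P 1 := by
  classical
  set φ := Int.castRingHom ℚ with hφ
  have hinj : Function.Injective φ := Int.cast_injective
  have hinjM : Function.Injective
      (φ.mapMatrix : Matrix (Fin (n + 2)) (Fin (n + 2)) ℤ →+* _) :=
    Matrix.map_injective hinj
  have hint : ∀ (P : Matrix (Fin (n + 2)) (Fin (n + 2)) ℤ) (ℓ : ℤ),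
      φ.mapMatrix P = (ℓ : ℚ) • Q → Intertwines A B P ℓ := by
    intro P ℓ hP
    refine ⟨hinjM ?_, hinjM ?_, fun k => ?_⟩
    · have h1 : φ.mapMatrix Pᵀ = (ℓ : ℚ) • Qᵀ := by
        rw [← transpose_smul, ← hP]; rfl
      rw [map_mul, h1, hP, Matrix.smul_mul, Matrix.mul_smul, hQ]
      ext i j
      simp only [RingHom.mapMatrix_apply, map_apply, Matrix.smul_apply, smul_eq_mul, map_mul,
        Matrix.one_apply, hφ, eq_intCast]
      push_cast
      ring
    · rw [map_mul, map_mul, hP, Matrix.mul_smul, Matrix.smul_mul]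
      exact congrArg _ hAQ
    · have h1 : Qᵀ *ᵥ kry (A.map φ) k = kry (B.map φ) k := by
        rw [← hk, mulVec_mulVec, hQ, one_mulVec]
      ext j
      apply hinj
      have h2 := congrFun h1 j
      have h3 : ∀ i, φ (P i j) = ℓ * Q i j := fun i => congrFun (congrFun hP i) j
      simp only [mulVec, dotProduct, transpose_apply, kry_map, Pi.smul_apply, smul_eq_mul,
        map_sum, map_mul] at h2 ⊢
      rw [← h2, Finset.mul_sum]
      refine Finset.sum_congr rfl fun i _ => ?_
      rw [h3]
      simp [hφ, mul_assoc]
  have hex : ∃ ℓ : ℕ, 0 < ℓ ∧ ∃ P : Matrix (Fin (n + 2)) (Fin (n + 2)) ℤ,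
      φ.mapMatrix P = ((ℓ : ℤ) : ℚ) • Q := by
    obtain ⟨d, hd⟩ := IsLocalization.exist_integer_multiples_of_finite (nonZeroDivisors ℤ)
      (fun ij : Fin (n + 2) × Fin (n + 2) => Q ij.1 ij.2)
    choose f hf using hd
    have hd0 : (d : ℤ) ≠ 0 := nonZeroDivisors.coe_ne_zero d
    refine ⟨(d : ℤ).natAbs, Int.natAbs_pos.mpr hd0,
      Matrix.of fun i j => (d : ℤ).sign * f (i, j), ?_⟩
    ext i j
    have h := hf (i, j)
    have h2 : (((d : ℤ).natAbs : ℤ) : ℚ) = ((d : ℤ).sign : ℚ) * (d : ℤ) := by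
      exact_mod_cast (Int.sign_mul_self_eq_natAbs (d : ℤ)).symm
    simp only [algebraMap_int_eq, eq_intCast, zsmul_eq_mul] at h
    rw [Matrix.smul_apply, h2, smul_eq_mul, mul_assoc, ← h]
    simp [hφ]
  obtain ⟨hpos, P, hP⟩ := Nat.find_spec hex
  rcases eq_or_ne (Nat.find hex) 1 with h1 | h1
  · rw [h1] at hP
    exact ⟨P, hint P 1 (by simpa using hP)⟩
  · exfalso
    obtain ⟨p, hp, q, hq⟩ := Nat.exists_prime_and_dvd h1
    have hdvd := hred P _ (hint P _ hP) p hp ⟨q, by rw [hq]; push_cast; ring⟩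
    choose P' hP' using hdvd
    have hq0 : 0 < q := Nat.pos_of_ne_zero (by rintro rfl; omega)
    have hlt : q < Nat.find hex := by
      rw [hq]; exact lt_mul_left hq0 hp.one_lt
    refine Nat.find_min hex hlt ⟨hq0, Matrix.of P', ?_⟩
    ext i j
    have h2 := congrFun (congrFun hP i) j
    have hp0 : (p : ℚ) ≠ 0 := by exact_mod_cast hp.ne_zero
    rw [hq] at h2
    simp only [RingHom.mapMatrix_apply, map_apply, hP', hφ, Matrix.smul_apply, smul_eq_mul,
      of_apply, map_mul, eq_intCast] at h2 ⊢
    push_cast at h2 ⊢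
    exact mul_left_cancel₀ hp0 (by linarith)

end final

/-- the main DGS criterion for almost controllable graphs with twins. -/
theorem isDGS_of_condition
    (n : ℕ) (A : Matrix (Fin (n + 2)) (Fin (n + 2)) ℤ)
    (hA : A.IsAdjMatrix) (hac : IsAlmostControllable A)
    (τ τ' : Fin (n + 2)) (hne : τ ≠ τ') (htw : IsTwinPair A τ τ')
    (b : ℤ) (hodd : Odd b) (hsf : Squarefree b) (hpos : 0 < b)
    (hcof : cofactorLast A τ = 2 ^ ((n + 2) / 2 - 1) * b ∨
            cofactorLast A τ = -(2 ^ ((n + 2) / 2 - 1) * b))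
    (hcond : ∀ p : ℕ, p.Prime → p ≠ 2 → (p : ℤ) ∣ b →
      ∃ x : Fin (n + 2) → ZMod p,
        ((walkMatrix A).map ((↑) : ℤ → ZMod p))ᵀ *ᵥ x = 0 ∧
        (A.map ((↑) : ℤ → ZMod p) -
          ((lam1 A τ τ' : ZMod p)) •
            (1 : Matrix (Fin (n + 2)) (Fin (n + 2)) (ZMod p))) *ᵥ x ≠ 0) :
    IsDGS A := by
  intro B hB hAB
  have hm := mom_eq_of_genCospectral hA hB hAB
  have hexp : (n + 2) / 2 - 1 = n / 2 := by omega
  rw [hexp] at hcof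
  have hdet := det_hat_alphaVec (A := A) hne htw
  have hassoc : ∃ u : ℤ, IsUnit u ∧ (hat A (alphaVec τ τ')).det = u * 2 ^ (n / 2 + 1) * b := by
    rcases hcof with h | h
    · exact ⟨-1, isUnit_one.neg, by rw [hdet, h]; ring⟩
    · exact ⟨1, isUnit_one, by rw [hdet, h]; ring⟩
  obtain ⟨u, hu, hdet'⟩ := hassoc
  have hdet0 : (hat A (alphaVec τ τ')).det ≠ 0 := by
    rw [hdet']
    exact mul_ne_zero (mul_ne_zero hu.ne_zero (by positivity)) (ne_of_gt hpos)
  -- odd prime powers dividing the determinant divide `b`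
  have hodd_dvd : ∀ p : ℕ, p.Prime → p ≠ 2 → ∀ k : ℕ,
      (p : ℤ) ^ k ∣ (hat A (alphaVec τ τ')).det → (p : ℤ) ^ k ∣ b := by
    intro p hp hp2 k h
    rw [hdet'] at h
    refine IsCoprime.dvd_of_dvd_mul_left (IsCoprime.mul_right ?_ ?_) h
    · simpa using (isCoprime_mul_unit_left_right hu ((p : ℤ) ^ k) 1).mpr isCoprime_one_right
    · refine IsCoprime.pow ?_
      have := (Nat.coprime_primes hp Nat.prime_two).mpr hp2
      exact_mod_cast Nat.isCoprime_iff_coprime.mpr this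
  set φ := Int.castRingHom ℚ with hφ
  obtain ⟨Q, hQ, hAQ, hk⟩ := exists_orthogonal (A := A.map φ) (B := B.map φ)
    (a := fun i => φ (alphaVec τ τ' i)) (map_symm' hA.symm) (map_symm' hB.symm)
    (by simp [Matrix.trace, hA.apply_diag, hB.apply_diag])
    (fun k => by rw [mom_map, mom_map, hm])
    (fun k => by rw [kry_map_dot, kry_dot_alphaVec hne htw, map_zero])
    (by
      have h := congrArg φ (alphaVec_self hne)
      simpa [dotProduct] using h)
    (by
      rw [← hat_map]
      have h : ((hat A (alphaVec τ τ')).map φ).det = φ (hat A (alphaVec τ τ')).det :=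
        (RingHom.map_det φ _).symm
      rw [h]
      exact fun h0 => hdet0 (Int.cast_injective (h0.trans Int.cast_zero.symm)))
  obtain ⟨P, hP⟩ := exists_intertwines_one hQ hAQ hk (by
    intro P ℓ hI p hp hpl
    rcases eq_or_ne p 2 with rfl | hp2
    · exact two_reduction hA hI hpl hne htw hodd hcof
    · have : Fact p.Prime := ⟨hp⟩
      have h := odd_prime_reduction hA hB hm hne htw hI p hp2 hpl
        (fun hsq => by
          have h2 := hodd_dvd p hp hp2 2 hsq
          rw [sq] at h2
          exact (Nat.prime_iff_prime_int.mp hp).not_isUnit (hsf _ h2))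
        (fun h1 => hcond p hp hp2 (by
          have := hodd_dvd p hp hp2 1 (by rwa [pow_one])
          rwa [pow_one] at this))
      intro i j
      exact (ZMod.intCast_zmod_eq_zero_iff_dvd _ p).mp (congrFun (congrFun h i) j))
  exact exists_perm_of_intertwines hP

end AlmostControllableGraphs
end

section
/- Let n ≥ 2 and let G be a graph on Fin n with twins τ < τ′, and let α = α(G) be the vector with entry −1 at τ, entry 1 at τ′, and 0 elsewhere. Then W(G)ᵀ·α = 0 and A(G)·α = λ₁(G)·α. If moreover G is almost controllable, then ξ(G) = W_{τ′,n}(G)·α = −W_{τ,n}(G)·α, where W_{i,n}(G) denotes the (i,n)-cofactor of W(G). -/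
/-!
The transposition `(τ τ')` is an automorphism and fixes the all-ones vector, hence fixes every
`A ^ k *ᵥ e`; so rows `τ` and `τ'` of the walk matrix agree (`walkMatrix_twin_row`). This gives
`Wᵀ α = 0`, and comparing columns `τ` and `τ'` of `A` gives `A α = λ₁ α`.

For the cofactors: if `i` is neither twin, deleting row `i` leaves two equal rows, so `ξ i = 0`.
Moreover `∑ i, ξ i` is the Laplace expansion along the last column of `W` with that column
replaced by `e`, a determinant with first and last columns equal, so the sum vanishes and
`ξ τ = -ξ τ'`.
-/

open Matrix

namespace AlmostControllableGraphs

variable {n : ℕ}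

lemma alphaVec_eq {n : ℕ} {τ τ' : Fin (n + 2)} (h : τ ≠ τ') :
    alphaVec τ τ' = Pi.single τ' 1 - Pi.single τ 1 := by
  funext i
  by_cases h1 : i = τ
  · subst h1
    simp [alphaVec, h]
  · by_cases h2 : i = τ'
    · subst h2
      simp [alphaVec, h1]
    · simp [alphaVec, h1, h2]

lemma pow_mulVec_eVec_swap {n : ℕ} {A : Matrix (Fin (n + 2)) (Fin (n + 2)) ℤ}
    {τ τ' : Fin (n + 2)} (htw : IsTwinPair A τ τ') (k : ℕ) (i : Fin (n + 2)) :
    (A ^ k *ᵥ eVec (n + 2)) (Equiv.swap τ τ' i) = (A ^ k *ᵥ eVec (n + 2)) i := by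
  induction k generalizing i with
  | zero => simp [eVec]
  | succ k ih =>
    rw [pow_succ', ← Matrix.mulVec_mulVec]
    generalize A ^ k *ᵥ eVec (n + 2) = v at ih
    simp only [Matrix.mulVec, dotProduct]
    rw [← Equiv.sum_comp (Equiv.swap τ τ')]
    exact Finset.sum_congr rfl fun j _ => by rw [htw, ih]

lemma walkMatrix_twin_row {n : ℕ} {A : Matrix (Fin (n + 2)) (Fin (n + 2)) ℤ}
    {τ τ' : Fin (n + 2)} (htw : IsTwinPair A τ τ') (j : Fin (n + 2)) :
    walkMatrix A τ' j = walkMatrix A τ j := by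
  have h := pow_mulVec_eVec_swap htw j τ
  rwa [Equiv.swap_apply_left] at h

lemma cofactorLast_eq_zero {n : ℕ} {A : Matrix (Fin (n + 2)) (Fin (n + 2)) ℤ}
    {τ τ' : Fin (n + 2)} (hne : τ ≠ τ') (htw : IsTwinPair A τ τ') {i : Fin (n + 2)}
    (h1 : i ≠ τ) (h2 : i ≠ τ') : cofactorLast A i = 0 := by
  obtain ⟨r, hr⟩ := Fin.exists_succAbove_eq h1.symm
  obtain ⟨r', hr'⟩ := Fin.exists_succAbove_eq h2.symm
  have hrr : r ≠ r' := by
    rintro rfl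
    exact hne (hr.symm.trans hr')
  have hdet : (Xmat A i).det = 0 := by
    refine Matrix.det_zero_of_row_eq hrr ?_
    funext c
    simp only [Xmat, Vmat, Matrix.of_apply, hr, hr']
    exact (walkMatrix_twin_row htw _).symm
  rw [cofactorLast, hdet, mul_zero]

/-- `ξ` is orthogonal to `e`, the first column of the walk matrix. -/
lemma sum_cofactorLast {n : ℕ} (A : Matrix (Fin (n + 2)) (Fin (n + 2)) ℤ) :
    ∑ i, cofactorLast A i = 0 := by
  have h0 : ((walkMatrix A).updateCol (Fin.last (n + 1)) (fun _ => 1)).det = 0 := by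
    refine Matrix.det_zero_of_column_eq (Fin.last_pos.ne : (0 : Fin (n + 2)) ≠ Fin.last (n + 1)) ?_
    intro i
    rw [Matrix.updateCol_self, Matrix.updateCol_ne Fin.last_pos.ne]
    simp [walkMatrix, eVec]
  rw [Matrix.det_succ_column _ (Fin.last (n + 1))] at h0
  rw [← h0]
  refine Finset.sum_congr rfl fun i _ => ?_
  rw [Matrix.updateCol_self, mul_one, Matrix.submatrix_updateCol_succAbove]
  simp only [cofactorLast, Fin.val_last]
  congr 2
  ext r c
  simp [Xmat, Vmat]

/-- properties of the twin-indicator vector `α(G)`. -/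
theorem alphaVec_properties
    (n : ℕ) (A : Matrix (Fin (n + 2)) (Fin (n + 2)) ℤ)
    (hA : A.IsAdjMatrix)
    (τ τ' : Fin (n + 2)) (hlt : τ < τ') (htw : IsTwinPair A τ τ') :
    (walkMatrix A)ᵀ *ᵥ alphaVec τ τ' = 0 ∧
    A *ᵥ alphaVec τ τ' = lam1 A τ τ' • alphaVec τ τ' ∧
    (IsAlmostControllable A →
      xiVec A = cofactorLast A τ' • alphaVec τ τ' ∧
      xiVec A = (-(cofactorLast A τ)) • alphaVec τ τ') := by
  have hne : τ ≠ τ' := hlt.ne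
  refine ⟨?_, ?_, fun _ => ?_⟩
  · funext j
    rw [alphaVec_eq hne, Matrix.mulVec_sub]
    simp [walkMatrix_twin_row htw j]
  · funext i
    rw [alphaVec_eq hne, Matrix.mulVec_sub]
    simp only [Matrix.mulVec_single_one, Pi.sub_apply, Matrix.col_apply, Pi.smul_apply, lam1,
      smul_eq_mul]
    by_cases h1 : i = τ
    · subst h1
      simp [hne, hA.apply_diag]
    · by_cases h2 : i = τ'
      · subst h2
        simp [h1, hA.apply_diag, hA.symm.apply τ i]
      · have h := htw i τ
        rw [Equiv.swap_apply_of_ne_of_ne h1 h2, Equiv.swap_apply_left] at h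
        simp [h1, h2, h]
  · have hsum : cofactorLast A τ + cofactorLast A τ' = 0 := by
      rw [← sum_cofactorLast A, Fintype.sum_eq_add τ τ' hne]
      exact fun i hi => cofactorLast_eq_zero hne htw hi.1 hi.2
    have hxi : xiVec A = cofactorLast A τ' • alphaVec τ τ' := by
      funext i
      by_cases h1 : i = τ
      · subst h1
        simp only [xiVec, alphaVec, Pi.smul_apply, if_true, smul_eq_mul]
        linarith
      · by_cases h2 : i = τ'
        · subst h2
          simp [xiVec, alphaVec, h1]
        · simp [xiVec, alphaVec, h1, h2, cofactorLast_eq_zero hne htw h1 h2]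
    exact ⟨hxi, by rw [hxi, eq_neg_of_add_eq_zero_right hsum]⟩

end AlmostControllableGraphs
end

section
/- Let n ≥ 2 and let G be an almost controllable graph on Fin n with twins τ < τ′ such that the (τ,n)-cofactor of W(G) equals ±2^{⌊n/2⌋−1}·b for an odd, square-free, positive integer b. Then for every odd prime p dividing b, the matrix Ŵ(G) = [e, A(G)e, …, A(G)^{n−2}e, α(G)] has rank n−1 over 𝔽_p. -/
/-!
The rows `τ` and `τ'` of `[e, Ae, …, A^{n-2}e]` coincide, because the walk counts `A^k e` are
invariant under the automorphism swapping the twins (`pow_mulVec_swap`). Hence the cofactors of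
the last column satisfy `ξ_τ' = -ξ_τ`, and expanding `det Ŵ` along `α` gives
`det Ŵ = -2 ξ_τ = ± 2^{⌊n/2⌋} b` (`det_hatW`). As `b` is square-free and `p` is odd, `p` divides
`det Ŵ` exactly once.

An integer square matrix `M` whose determinant is divisible by `p` but not by `p²` has corank
exactly one mod `p` (`rank_map_of_dvd_det`): if all maximal proper minors vanished mod `p`, then
`adj M = p C`, so `M C = (det M / p) I`, and taking determinants mod `p` would give
`p ∣ det M / p`.
-/

open Matrix

namespace AlmostControllableGraphs

variable {n : ℕ}

theorem pow_mulVec_swap (A : Matrix (Fin (n + 2)) (Fin (n + 2)) ℤ) (τ τ' : Fin (n + 2))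
    (htw : IsTwinPair A τ τ') (k : ℕ) (i : Fin (n + 2)) :
    ((A ^ k) *ᵥ eVec (n + 2)) (Equiv.swap τ τ' i) = ((A ^ k) *ᵥ eVec (n + 2)) i := by
  induction k generalizing i with
  | zero => simp [eVec]
  | succ k ih =>
    rw [pow_succ', ← Matrix.mulVec_mulVec]
    simp only [Matrix.mulVec, dotProduct] at ih ⊢
    rw [← Equiv.sum_comp (Equiv.swap τ τ')]
    exact Finset.sum_congr rfl fun j _ => by rw [htw, ih]

/-- The matrix `[e, Ae, …, A^{n-2}e, v]` with an arbitrary last column `v`. -/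
def walkWithLast (A : Matrix (Fin (n + 2)) (Fin (n + 2)) ℤ) (v : Fin (n + 2) → ℤ) :
    Matrix (Fin (n + 2)) (Fin (n + 2)) ℤ :=
  Matrix.of fun i j => if (j : ℕ) = n + 1 then v i else walkMatrix A i j

theorem det_walkWithLast (A : Matrix (Fin (n + 2)) (Fin (n + 2)) ℤ) (v : Fin (n + 2) → ℤ) :
    (walkWithLast A v).det = ∑ i, v i * cofactorLast A i := by
  rw [Matrix.det_succ_column _ (Fin.last (n + 1))]
  refine Finset.sum_congr rfl fun i _ => ?_
  have hsub : (walkWithLast A v).submatrix i.succAbove (Fin.last (n + 1)).succAbove = Xmat A i := by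
    ext r c
    simp [walkWithLast, Xmat, Vmat, c.isLt.ne]
  rw [hsub]
  simp only [walkWithLast, cofactorLast, Matrix.of_apply, Fin.val_last, if_true]
  ring

theorem det_hatW (A : Matrix (Fin (n + 2)) (Fin (n + 2)) ℤ) (τ τ' : Fin (n + 2)) (hne : τ ≠ τ')
    (htw : IsTwinPair A τ τ') : (hatW A τ τ').det = -(2 * cofactorLast A τ) := by
  -- With last column `1_τ + 1_τ'` the rows `τ` and `τ'` agree, so the determinant vanishes.
  have h0 : cofactorLast A τ + cofactorLast A τ' = 0 := by
    have h := det_walkWithLast A (Pi.single τ 1 + Pi.single τ' 1)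
    rw [Matrix.det_zero_of_row_eq hne] at h
    · simpa [add_mul, Finset.sum_add_distrib, Pi.single_apply] using h.symm
    · funext j
      have hj := pow_mulVec_swap A τ τ' htw j τ
      rw [Equiv.swap_apply_left] at hj
      simp [walkWithLast, walkMatrix, hj, hne, hne.symm]
  have h := det_walkWithLast A (alphaVec τ τ')
  have hα : alphaVec τ τ' = -Pi.single τ 1 + Pi.single τ' 1 := by
    funext i
    by_cases h1 : i = τ
    · subst h1; simp [alphaVec, hne]
    · by_cases h2 : i = τ'
      · subst h2; simp [alphaVec, h1]
      · simp [alphaVec, h1, h2]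
  have hs : ∑ i, alphaVec τ τ' i * cofactorLast A i = -cofactorLast A τ + cofactorLast A τ' := by
    simp [hα, add_mul, Finset.sum_add_distrib, Pi.single_apply]
  have hW : hatW A τ τ' = walkWithLast A (alphaVec τ τ') := rfl
  rw [hW, h, hs]
  linarith

/-- An integer matrix whose determinant is divisible by `p` exactly once has corank one mod `p`. -/
theorem rank_map_of_dvd_det {m p : ℕ} (hp : p.Prime) (M : Matrix (Fin (m + 1)) (Fin (m + 1)) ℤ)
    (h1 : (p : ℤ) ∣ M.det) (h2 : ¬ (p : ℤ) ^ 2 ∣ M.det) :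
    (M.map ((↑) : ℤ → ZMod p)).rank = m := by
  have : Fact p.Prime := ⟨hp⟩
  have hp0 : (p : ℤ) ≠ 0 := by exact_mod_cast hp.ne_zero
  have hdet0 : (M.map ((↑) : ℤ → ZMod p)).det = 0 := by
    have := (Int.castRingHom (ZMod p)).map_det M
    rw [RingHom.mapMatrix_apply] at this
    exact this.symm.trans ((ZMod.intCast_zmod_eq_zero_iff_dvd _ _).2 h1)
  apply le_antisymm
  · by_contra! hlt
    have hle := (M.map ((↑) : ℤ → ZMod p)).rank_le_width
    have htop : LinearMap.range (M.map ((↑) : ℤ → ZMod p)).mulVecLin = ⊤ := by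
      apply Submodule.eq_top_of_finrank_eq
      rw [Module.finrank_fin_fun]
      exact le_antisymm hle hlt
    have hsurj := LinearMap.range_eq_top.1 htop
    have hu := Matrix.mulVec_surjective_iff_isUnit.1 hsurj
    rw [Matrix.isUnit_iff_isUnit_det, hdet0] at hu
    exact not_isUnit_zero hu
  · by_contra! hlt
    have hadj : ∀ i j, (p : ℤ) ∣ M.adjugate i j := by
      intro i j
      rw [Matrix.adjugate_fin_succ_eq_det_submatrix]
      refine Dvd.dvd.mul_left ?_ _
      rw [← ZMod.intCast_zmod_eq_zero_iff_dvd]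
      by_contra hne
      have hmap := (Int.castRingHom (ZMod p)).map_det (M.submatrix j.succAbove i.succAbove)
      rw [RingHom.mapMatrix_apply] at hmap
      have hr := Matrix.rank_of_det_ne_zero fun h => hne (hmap.trans h)
      have hle := (M.map ((↑) : ℤ → ZMod p)).rank_submatrix_le j.succAbove i.succAbove
      rw [Fintype.card_fin] at hr
      exact absurd (hr.symm.le.trans hle) (not_le.2 hlt)
    choose C hC using hadj
    obtain ⟨d, hd⟩ := h1
    have hMC : M * Matrix.of C = d • (1 : Matrix (Fin (m + 1)) (Fin (m + 1)) ℤ) := by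
      have hadjC : M.adjugate = (p : ℤ) • Matrix.of C := by
        ext i j
        simp [hC]
      have h := M.mul_adjugate
      rw [hadjC, Matrix.mul_smul, hd, mul_smul] at h
      exact smul_right_injective _ hp0 h
    have hpow : M.det * (Matrix.of C).det = d ^ (m + 1) := by
      rw [← Matrix.det_mul, hMC, Matrix.det_smul, Matrix.det_one, Fintype.card_fin, mul_one]
    have hpd : (p : ℤ) ∣ d := by
      apply (Nat.prime_iff_prime_int.1 hp).dvd_of_dvd_pow (n := m + 1)
      rw [← hpow, hd, mul_assoc]
      exact dvd_mul_right _ _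
    apply h2
    rw [hd, sq]
    exact mul_dvd_mul_left _ hpd

/-- `Ŵ(G)` has rank `n - 1` over `𝔽_p` for every odd prime `p ∣ b`. -/
theorem hatW_rank_mod_p
    (n : ℕ) (A : Matrix (Fin (n + 2)) (Fin (n + 2)) ℤ)
    (hA : A.IsAdjMatrix) (hac : IsAlmostControllable A)
    (τ τ' : Fin (n + 2)) (hlt : τ < τ') (htw : IsTwinPair A τ τ')
    (b : ℤ) (hodd : Odd b) (hsf : Squarefree b) (hpos : 0 < b)
    (hcof : cofactorLast A τ = 2 ^ ((n + 2) / 2 - 1) * b ∨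
            cofactorLast A τ = -(2 ^ ((n + 2) / 2 - 1) * b))
    (p : ℕ) (hp : p.Prime) (hp2 : p ≠ 2) (hdvd : (p : ℤ) ∣ b) :
    ((hatW A τ τ').map ((↑) : ℤ → ZMod p)).rank = n + 1 := by
  have hp' : Prime (p : ℤ) := Nat.prime_iff_prime_int.1 hp
  have hdet := det_hatW A τ τ' hlt.ne htw
  obtain ⟨k, hk⟩ : ∃ k : ℕ, ∀ x : ℤ, x ∣ (hatW A τ τ').det ↔ x ∣ 2 ^ k * b := by
    refine ⟨(n + 2) / 2 - 1 + 1, fun x => ?_⟩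
    rw [hdet, dvd_neg]
    rcases hcof with h | h
    · rw [h, pow_succ', mul_assoc]
    · rw [h, mul_neg, dvd_neg, pow_succ', mul_assoc]
  refine rank_map_of_dvd_det hp _ ((hk _).2 (hdvd.mul_left _)) fun hsq => ?_
  have hcop : IsCoprime ((p : ℤ) ^ 2) (2 ^ k) := by
    apply IsCoprime.pow
    exact_mod_cast (Nat.coprime_primes hp Nat.prime_two).2 hp2
  have hb : (p : ℤ) ^ 2 ∣ b := hcop.dvd_of_dvd_mul_left ((hk _).1 hsq)
  rw [sq] at hb
  exact hp'.not_isUnit (hsf _ hb)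

end AlmostControllableGraphs
end
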